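/- There is an E-unitary one-relator inverse monoid Inv⟨A | w = 1⟩ with undecidable word problem: there exist n : ℕ and a word w ∈ FreeMonoid ((Fin n) × Bool) such that, letting σ be the congruence generated by the Vagner congruence ν together with the pair (w, 1), (i) the predicate on pairs of words (u, v) given by 'σ relates u and v' is not ComputablePred, and (ii) the quotient monoid is E-unitary: for every word u, if FreeGroup.mk u lies in the normal closure of {FreeGroup.mk w} in FreeGroup (Fin n) (equivalently, the image of u in the maximal group image PresentedGroup {FreeGroup.mk w} is the identity), then σ relates u * u to u. -/

import Mathlib

/-- The formal inverse of a word over `B`: reverse the word and negate the `Bool` component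
of each letter. -/
def wInv {B : Type*} (w : FreeMonoid (B × Bool)) : FreeMonoid (B × Bool) :=
  FreeMonoid.ofList (((FreeMonoid.toList w).map fun p => (p.1, !p.2)).reverse)

/-- The generating relation of the Vagner congruence: `w w⁻¹ w ~ w` and
`w w⁻¹ u u⁻¹ ~ u u⁻¹ w w⁻¹` for all words `u, w`. -/
def vagnerRel (B : Type*) : FreeMonoid (B × Bool) → FreeMonoid (B × Bool) → Prop :=
  fun x y =>
    (∃ w, x = w * wInv w * w ∧ y = w) ∨
    (∃ u w, x = w * wInv w * (u * wInv u) ∧ y = u * wInv u * (w * wInv w))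

/-- The congruence defining the one-relator inverse monoid `Inv⟨Fin n | w = 1⟩`: generated by
the Vagner congruence together with the single pair `(w, 1)`. -/
def oneRelatorInvCon {n : ℕ} (w : FreeMonoid (Fin n × Bool)) : Con (FreeMonoid (Fin n × Bool)) :=
  conGen (fun x y => vagnerRel (Fin n) x y ∨ (x = w ∧ y = 1))

instance {α : Type*} [Primcodable α] : Primcodable (FreeMonoid α) :=
  Primcodable.ofEquiv (List α) FreeMonoid.toList


namespace OneRel
open Function Relation

/-! ## Part A1: counter programs -/

/-- Nondeterministic counter programs. -/
inductive Prog : Type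
  | skip : Prog
  | inc (i : ℕ) : Prog
  | dec (i : ℕ) : Prog
  | tst (i : ℕ) : Prog
  | seq (P Q : Prog) : Prog
  | star (P : Prog) : Prog

/-- Relational semantics of counter programs. -/
def sem : Prog → (ℕ → ℕ) → (ℕ → ℕ) → Prop
  | .skip => fun s s' => s' = s
  | .inc i => fun s s' => s' = update s i (s i + 1)
  | .dec i => fun s s' => ∃ k, s i = k + 1 ∧ s' = update s i k
  | .tst i => fun s s' => s i = 0 ∧ s' = s
  | .seq P Q => fun s s' => ∃ r, sem P s r ∧ sem Q r s'
  | .star P => fun s s' => ReflTransGen (sem P) s s'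

/-- `P` started in `s` terminates exactly in `t`. -/
def Runs (P : Prog) (s t : ℕ → ℕ) : Prop := ∀ s', sem P s s' ↔ s' = t

/-- While loop on register `i`, decrementing at the start of each round. -/
def loop (i : ℕ) (P : Prog) : Prog := .seq (.star (.seq (.dec i) P)) (.tst i)

theorem Runs.seq {P Q s t r} (h1 : Runs P s t) (h2 : Runs Q t r) : Runs (.seq P Q) s r := by
  intro s'
  simp only [sem]
  constructor
  · rintro ⟨x, hx, hy⟩
    rw [h1] at hx; subst hx; exact (h2 _).1 hy
  · rintro rfl
    exact ⟨t, (h1 _).2 rfl, (h2 _).2 rfl⟩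

theorem Runs.congr {P s t t'} (h1 : Runs P s t) (h : t = t') : Runs P s t' := h ▸ h1

theorem Runs.skip (s) : Runs .skip s s := fun _ => Iff.rfl

theorem Runs.inc (s i) : Runs (.inc i) s (update s i (s i + 1)) := fun _ => Iff.rfl

theorem Runs.loop_zero {i P s} (h : s i = 0) : Runs (loop i P) s s := by
  intro s'
  simp only [loop, sem]
  constructor
  · rintro ⟨x, hx, h0, rfl⟩
    rcases hx.cases_head with h1 | ⟨y, ⟨z, ⟨k, hk, -⟩, -⟩, -⟩
    · exact h1.symm
    · omega
  · rintro rfl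
    exact ⟨_, .refl, h, rfl⟩

theorem Runs.loop_succ {i P s t r k} (h : s i = k + 1) (h1 : Runs P (update s i k) t)
    (h2 : Runs (loop i P) t r) : Runs (loop i P) s r := by
  intro s'
  rw [← h2 s']
  simp only [loop, sem]
  constructor
  · rintro ⟨x, hx, h0, rfl⟩
    rcases hx.cases_head with rfl | ⟨y, ⟨z, ⟨k', hk, rfl⟩, hz⟩, hy⟩
    · omega
    · obtain rfl : k' = k := by omega
      rw [h1] at hz; subst hz
      exact ⟨_, hy, h0, rfl⟩
  · rintro ⟨x, hx, h0, rfl⟩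
    exact ⟨_, .head ⟨_, ⟨k, h, rfl⟩, (h1 _).2 rfl⟩ hx, h0, rfl⟩

theorem Runs.loop_iter {i P} (s : ℕ → ℕ → ℕ) (hi : ∀ k, s k i = k) :
    ∀ n, (∀ k < n, Runs P (update (s (k + 1)) i k) (s k)) → Runs (loop i P) (s n) (s 0)
  | 0, _ => Runs.loop_zero (hi 0)
  | n + 1, h => Runs.loop_succ (hi _) (h n (by omega))
      (Runs.loop_iter s hi n fun k hk => h k (by omega))

theorem runs_clear (i s) : Runs (loop i .skip) s (update s i 0) := by
  have := Runs.loop_iter (i := i) (P := .skip) (fun k => update s i k) (by simp) (s i)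
    (by intro k _; refine (Runs.skip _).congr ?_; simp)
  simpa using this

theorem runs_move {i o} (h : i ≠ o) (s) :
    Runs (loop i (.inc o)) s (update (update s i 0) o (s o + s i)) := by
  have := Runs.loop_iter (i := i) (P := .inc o)
    (fun k => update (update s i k) o (s o + (s i - k))) (by simp [h]) (s i)
    (by
      intro k hk; refine (Runs.inc _ _).congr ?_
      funext j
      simp only [update_apply]
      split_ifs <;> simp_all <;> omega)
  simpa using this

theorem runs_copy {i o c} (h : i ≠ o) (h1 : i ≠ c) (h2 : o ≠ c) (s) (hc : s c = 0) :
    Runs (.seq (loop i (.seq (.inc o) (.inc c))) (loop c (.inc i))) s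
      (update s o (s o + s i)) := by
  have := Runs.loop_iter (i := i) (P := .seq (.inc o) (.inc c))
    (fun k => update (update (update s i k) o (s o + (s i - k))) c (s i - k))
    (by simp [h, h1]) (s i)
    (by
      intro k hk; refine ((Runs.inc _ _).seq (Runs.inc _ _)).congr ?_
      funext j
      simp only [update_apply]
      split_ifs <;> simp_all <;> omega)
  refine Runs.congr (Runs.seq (t := update (update (update s i 0) o (s o + s i)) c (s i)) ?_
    (runs_move h1.symm _)) ?_
  · simp only [Nat.sub_zero, Nat.sub_self, Nat.add_zero, update_eq_self] at this
    rwa [show update s c 0 = s by rw [← hc, update_eq_self]] at this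
  · funext j
    simp only [update_apply]
    split_ifs <;> simp_all

/-- A function is compilable to a counter program. -/
def Compilable {n : ℕ} (f : List.Vector ℕ n → ℕ) : Prop :=
  ∀ (ins : Fin n → ℕ) (o B : ℕ), (∀ i, ins i < B) → o < B → (∀ i, ins i ≠ o) →
    ∃ P, ∀ s : ℕ → ℕ, (∀ j, B ≤ j → s j = 0) → s o = 0 →
      Runs P s (update s o (f (List.Vector.ofFn fun i => s (ins i))))

theorem exists_clear (B m : ℕ) : ∃ P, ∀ s : ℕ → ℕ,
    Runs P s (fun j => if B ≤ j ∧ j < B + m then 0 else s j) := by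
  induction m with
  | zero => exact ⟨.skip, fun s => (Runs.skip s).congr (by funext j; rw [if_neg (by omega)])⟩
  | succ m ih =>
    obtain ⟨P, hP⟩ := ih
    refine ⟨.seq P (loop (B + m) .skip), fun s => ((hP s).seq (runs_clear _ _)).congr ?_⟩
    funext j
    simp only [update_apply]
    split_ifs <;> first | rfl | omega

theorem exists_eval {n k : ℕ} (g : Fin n → List.Vector ℕ k → ℕ) (hg : ∀ i, Compilable (g i))
    (ins : Fin k → ℕ) (B : ℕ) (hins : ∀ i, ins i < B) (m : ℕ) (hm : m ≤ n) :
    ∃ P, ∀ s : ℕ → ℕ, (∀ j, B ≤ j → s j = 0) →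
      Runs P s (fun j => if h : B ≤ j ∧ j < B + m then
        g ⟨j - B, by omega⟩ (List.Vector.ofFn fun i => s (ins i)) else s j) := by
  induction m with
  | zero => exact ⟨.skip, fun s _ => (Runs.skip s).congr (by funext j; rw [dif_neg (by omega)])⟩
  | succ m ih =>
    obtain ⟨P, hP⟩ := ih (by omega)
    obtain ⟨Q, hQ⟩ := hg ⟨m, by omega⟩ ins (B + m) (B + n) (fun i => by have := hins i; omega)
      (by omega) (fun i => by have := hins i; omega)
    refine ⟨.seq P Q, fun s hs => ((hP s hs).seq (hQ _ ?_ ?_)).congr ?_⟩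
    · intro j hj
      rw [dif_neg (by omega)]
      exact hs j (by omega)
    · rw [dif_neg (by omega)]
      exact hs _ (by omega)
    · have key : (fun i => if h : B ≤ ins i ∧ ins i < B + m then
        g ⟨ins i - B, by omega⟩ (List.Vector.ofFn fun i => s (ins i)) else s (ins i)) =
          fun i => s (ins i) := by
        funext i
        have := hins i
        rw [dif_neg (by omega)]
      funext j
      simp only [key]
      by_cases hj : j = B + m
      · subst hj
        simp
      · rw [update_of_ne hj]
        by_cases h2 : B ≤ j ∧ j < B + m
        · rw [dif_pos h2, dif_pos (by omega)]
        · rw [dif_neg h2, dif_neg (by omega)]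

theorem compilable_comp {n k : ℕ} {f : List.Vector ℕ n → ℕ} (g : Fin n → List.Vector ℕ k → ℕ)
    (hf : Compilable f) (hg : ∀ i, Compilable (g i)) :
    Compilable fun v => f (List.Vector.ofFn fun i => g i v) := by
  intro ins o B hins ho hne
  obtain ⟨P, hP⟩ := exists_eval g hg ins B hins n le_rfl
  obtain ⟨Q, hQ⟩ := hf (fun i => B + i) o (B + n) (fun i => by omega) (by omega)
    (fun i => by omega)
  obtain ⟨R, hR⟩ := exists_clear B n
  refine ⟨.seq P (.seq Q R), fun s hs hso => ((hP s hs).seq ((hQ _ ?_ ?_).seq (hR _))).congr ?_⟩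
  · intro j hj
    rw [dif_neg (by omega)]
    exact hs j (by omega)
  · rw [dif_neg (by omega)]
    exact hso
  · funext j
    by_cases hj : j = o
    · subst hj
      rw [if_neg (by omega)]
      simp
    · rw [update_of_ne hj, update_of_ne hj]
      by_cases h2 : B ≤ j ∧ j < B + n
      · rw [if_pos h2, hs j h2.1]
      · rw [if_neg h2, dif_neg h2]

theorem upd_aux (s : ℕ → ℕ) (B k m m' a a' : ℕ) (h2 : s (B + 2) = 0) (hm : m + 1 = m') :
    let X := update (update (update (update (update s (B + 3) (k + 1)) B m) (B + 1) a)
      (B + 3) k) (B + 2) a'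
    let Y := update X (B + 1) 0
    let Z := update (update Y (B + 2) 0) (B + 1) (Y (B + 1) + Y (B + 2))
    update Z B (Z B + 1) = update (update (update s (B + 3) k) B m') (B + 1) a' := by
  intro X Y Z
  subst hm
  have e1 : Y (B + 1) = 0 := by simp [Y]
  have e2 : Y (B + 2) = a' := by simp [Y, X]
  have e3 : Z B = m := by simp [Z, Y, X]
  rw [e3]
  funext j
  simp only [Z, e1, e2]
  simp only [Y, X, update_apply]
  split_ifs <;> simp_all

theorem compilable_prec {n : ℕ} {f : List.Vector ℕ n → ℕ} {g : List.Vector ℕ (n + 2) → ℕ}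
    (hf : Compilable f) (hg : Compilable g) :
    Compilable fun v : List.Vector ℕ (n + 1) =>
      v.head.rec (f v.tail) fun y IH => g (y ::ᵥ IH ::ᵥ v.tail) := by
  intro ins o B hins ho hne
  -- registers: B = y, B+1 = accumulator, B+2 = temporary, B+3 = counter, B+4 = scratch
  obtain ⟨P, hP⟩ := hf (fun i => ins i.succ) (B + 1) (B + 5)
    (fun i => by have := hins i.succ; omega) (by omega) (fun i => by have := hins i.succ; omega)
  obtain ⟨Q, hQ⟩ := hg (Fin.cons B (Fin.cons (B + 1) fun i => ins i.succ)) (B + 2) (B + 5)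
    (fun i => by
      refine Fin.cases ?_ (fun i => ?_) i
      · simp
      · refine Fin.cases ?_ (fun i => ?_) i
        · simp
        · have := hins i.succ; simp; omega) (by omega)
    (fun i => by
      refine Fin.cases ?_ (fun i => ?_) i
      · simp
      · refine Fin.cases ?_ (fun i => ?_) i
        · simp
        · have := hins i.succ; simp; omega)
  refine ⟨.seq (.seq (loop (ins 0) (.seq (.inc (B + 3)) (.inc (B + 4)))) (loop (B + 4) (.inc (ins 0))))
    (.seq P (.seq (loop (B + 3) (.seq Q (.seq (loop (B + 1) .skip)
      (.seq (loop (B + 2) (.inc (B + 1))) (.inc B)))))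
      (.seq (loop (B + 1) (.inc o)) (loop B .skip)))), fun s hs hso => ?_⟩
  set N := s (ins 0) with hN
  set v : List.Vector ℕ n := List.Vector.ofFn fun i => s (ins i.succ) with hv
  have h0 := hins 0
  have ho0 := hne 0
  have hB : s B = 0 := hs _ (by omega)
  have hB1 : s (B + 1) = 0 := hs _ (by omega)
  have hB2 : s (B + 2) = 0 := hs _ (by omega)
  have hB3 : s (B + 3) = 0 := hs _ (by omega)
  set F : ℕ → ℕ := fun m => Nat.rec (f v) (fun y IH => g (y ::ᵥ IH ::ᵥ v)) m with hF
  let st : ℕ → ℕ → ℕ := fun k => update (update (update s (B + 3) k) B (N - k)) (B + 1) (F (N - k))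
  have hst : ∀ k, st k = update (update (update s (B + 3) k) B (N - k)) (B + 1) (F (N - k)) :=
    fun _ => rfl
  have e1 := runs_copy (i := ins 0) (o := B + 3) (c := B + 4) (by omega) (by omega) (by omega) s
    (hs _ (by omega))
  have e2 := hP (update s (B + 3) (s (B + 3) + s (ins 0)))
    (by intro j hj; rw [update_of_ne (by omega)]; exact hs j (by omega))
    (by rw [update_of_ne (by omega)]; exact hB1)
  have hv1 : (List.Vector.ofFn fun i => update s (B + 3) (s (B + 3) + s (ins 0)) (ins i.succ)) = v := by
    rw [hv]; congr 1; funext i; have := hins i.succ; rw [update_of_ne (by omega)]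
  rw [hv1] at e2
  have e2' : update (update s (B + 3) (s (B + 3) + s (ins 0))) (B + 1) (f v) = st N := by
    funext j
    simp only [hst, update_apply]
    split_ifs <;> simp_all
  rw [e2'] at e2
  have e3 := Runs.loop_iter (i := B + 3) (P := .seq Q (.seq (loop (B + 1) .skip)
      (.seq (loop (B + 2) (.inc (B + 1))) (.inc B)))) st (by intro k; simp [st]) N (by
    intro k hk
    have q1 := hQ (update (st (k + 1)) (B + 3) k)
      (by
        intro j hj
        simp only [hst]
        rw [update_of_ne (by omega), update_of_ne (by omega), update_of_ne (by omega),
          update_of_ne (by omega)]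
        exact hs j (by omega))
      (by simp [hst, hB2])
    have hvec : (List.Vector.ofFn fun i => update (st (k + 1)) (B + 3) k
        ((Fin.cons B (Fin.cons (B + 1) fun i => ins i.succ) : Fin (n + 2) → ℕ) i)) =
        (N - (k + 1)) ::ᵥ F (N - (k + 1)) ::ᵥ v := by
      rw [List.Vector.ofFn, List.Vector.ofFn]
      congr 1
      · simp [hst]
      congr 1
      · simp [hst]
      · rw [hv]
        congr 1
        funext i
        have := hins i.succ
        simp only [Fin.cons_succ, hst]
        rw [update_of_ne (by omega), update_of_ne (by omega), update_of_ne (by omega),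
          update_of_ne (by omega)]
    rw [hvec] at q1
    have hFs : g ((N - (k + 1)) ::ᵥ F (N - (k + 1)) ::ᵥ v) = F (N - k) := by
      rw [show N - k = (N - (k + 1)) + 1 by omega]
    rw [hFs] at q1
    refine (q1.seq ((runs_clear _ _).seq ((runs_move (by omega) _).seq (Runs.inc _ _)))).congr ?_
    exact upd_aux s B k (N - (k + 1)) (N - k) (F (N - (k + 1))) (F (N - k)) hB2 (by omega))
  refine (e1.seq (e2.seq (e3.seq ((runs_move (by omega) _).seq (runs_clear _ _))))).congr ?_
  have hhead : (List.Vector.ofFn fun i => s (ins i)).head = N := by simp [List.Vector.ofFn, hN]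
  have htail : (List.Vector.ofFn fun i => s (ins i)).tail = v := by simp [List.Vector.ofFn, hv]
  beta_reduce
  rw [hhead, htail]
  change _ = update s o (F N)
  rw [hst, Nat.sub_zero]
  generalize F N = a
  clear e3 e2' hst st hF F e2 hv1 hQ hP htail hhead hv e1
  clear v
  have hne1 : o ≠ B := by omega
  have hne2 : o ≠ B + 1 := by omega
  have hne3 : o ≠ B + 3 := by omega
  funext j
  simp only [update_apply]
  split_ifs <;> simp_all

theorem compilable_of_primrec {n : ℕ} {f : List.Vector ℕ n → ℕ} (h : Nat.Primrec' f) :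
    Compilable f := by
  induction h with
  | zero =>
    intro ins o B _ _ _
    refine ⟨.skip, fun s hs hso => (Runs.skip s).congr ?_⟩
    funext j; simp only [update_apply]; split_ifs <;> simp_all
  | succ =>
    intro ins o B hins ho hne
    have := hins 0
    have := hne 0
    refine ⟨.seq _ (.inc o), fun s hs hso => ((runs_copy (i := ins 0) (o := o) (c := B)
      (by omega) (by omega) (by omega) s (hs _ le_rfl)).seq (Runs.inc _ _)).congr ?_⟩
    funext j; simp only [update_apply]; split_ifs <;> simp_all [List.Vector.ofFn]
  | get i =>
    intro ins o B hins ho hne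
    have := hins i
    have := hne i
    refine ⟨_, fun s hs hso => (runs_copy (i := ins i) (o := o) (c := B)
      (by omega) (by omega) (by omega) s (hs _ le_rfl)).congr ?_⟩
    funext j; simp only [update_apply]; split_ifs <;> simp_all
  | comp g _ _ hf hg => exact compilable_comp g hf hg
  | prec _ _ hf hg => exact compilable_prec hf hg

/-- There is a counter program whose halting set (from a single nonzero register) is not
computable. -/
theorem exists_prog : ∃ P : Prog, ¬ ComputablePred fun n : ℕ =>
    sem P (update (fun _ => 0) 0 n) (fun _ => 0) := by
  let f : ℕ → ℕ → ℕ := fun k n =>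
    if (Nat.Partrec.Code.evaln k (Denumerable.ofNat Nat.Partrec.Code n) 0).isSome then 0 else 1
  have hf : Primrec₂ f := by
    refine Primrec.ite ?_ (Primrec.const 0) (Primrec.const 1)
    have h1 : Primrec fun p : ℕ × ℕ =>
        (Nat.Partrec.Code.evaln p.1 (Denumerable.ofNat Nat.Partrec.Code p.2) 0).isSome :=
      Primrec.option_isSome.comp (Nat.Partrec.Code.primrec_evaln.comp
        ((Primrec.fst.pair ((Primrec.ofNat _).comp Primrec.snd)).pair (Primrec.const 0)))
    exact Primrec.eq.comp h1 (Primrec.const true)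
  obtain ⟨Q, hQ⟩ := compilable_of_primrec (Nat.Primrec'.prim_iff₂.2 hf)
    (fun i => if i = 0 then 1 else 0) 2 3 (fun i => by split_ifs <;> omega) (by omega)
    (fun i => by split_ifs <;> omega)
  let P : Prog := .seq (.star (.inc 1)) (.seq Q (.seq (.tst 2)
    (.seq (loop 1 .skip) (loop 0 .skip))))
  have key : ∀ n, sem P (update (fun _ => 0) 0 n) (fun _ => 0) ↔ ∃ k, f k n = 0 := by
    intro n
    have hstar : ∀ s', sem (.star (.inc 1)) (update (fun _ => 0) 0 n) s' ↔
        ∃ k, s' = update (update (fun _ => 0) 0 n) 1 k := by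
      intro s'
      simp only [sem]
      constructor
      · intro h
        induction h with
        | refl => exact ⟨0, by simp⟩
        | tail _ h ih =>
          obtain ⟨k, rfl⟩ := ih
          exact ⟨k + 1, by simp [h]⟩
      · rintro ⟨k, rfl⟩
        induction k with
        | zero =>
          have e : update (update (fun _ => 0) 0 n) 1 0 = update (fun _ : ℕ => 0) 0 n := by
            funext j; simp only [update_apply]; split_ifs <;> simp_all
          rw [e]
        | succ k ih => exact ih.tail (by simp)
    have hq : ∀ k, Runs Q (update (update (fun _ => 0) 0 n) 1 k)
        (update (update (update (fun _ => 0) 0 n) 1 k) 2 (f k n)) := by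
      intro k
      refine (hQ _ ?_ ?_).congr ?_
      · intro j hj
        rw [update_of_ne (by omega), update_of_ne (by omega)]
      · simp
      · simp [List.Vector.ofFn]
    have hc : ∀ t : ℕ → ℕ, Runs (.seq (loop 1 .skip) (loop 0 .skip)) t
        (update (update t 1 0) 0 0) := fun t => (runs_clear _ _).seq (runs_clear _ _)
    constructor
    · rintro ⟨x, hx, y, hy, z, ⟨hz, rfl⟩, -⟩
      obtain ⟨k, rfl⟩ := (hstar _).1 hx
      rw [hq] at hy
      subst hy
      exact ⟨k, by simpa using hz⟩
    · rintro ⟨k, hk⟩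
      refine ⟨_, (hstar _).2 ⟨k, rfl⟩, _, (hq k _).2 rfl, _, ⟨by simpa using hk, rfl⟩, ?_⟩
      refine (hc _ _).2 ?_
      funext j
      simp only [update_apply]
      split_ifs <;> simp_all
  refine ⟨P, fun h => ComputablePred.halting_problem 0 ?_⟩
  refine ComputablePred.computable_of_manyOneReducible ⟨fun c => Encodable.encode c,
    Computable.encode, fun c => ?_⟩ h
  change (Nat.Partrec.Code.eval c 0).Dom ↔ _
  rw [key, Part.dom_iff_mem]
  simp only [Nat.Partrec.Code.evaln_complete, f]
  rw [exists_comm]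
  refine exists_congr fun k => ?_
  rw [Denumerable.ofNat_encode]
  cases Nat.Partrec.Code.evaln k c 0 <;> simp

end OneRel


namespace OneRel
open Function Relation

/-! ## Part A2: affine transition systems -/

/-- An affine partial map `p * k + r ↦ q * k + s`, coded as `(p, r, q, s)`. -/
abbrev Atom := ℕ × ℕ × ℕ × ℕ

/-- The relation of an atom. -/
def AStep (α : Atom) (n m : ℕ) : Prop := ∃ k, n = α.1 * k + α.2.1 ∧ m = α.2.2.1 * k + α.2.2.2

/-- One step of a finite family of atoms. -/
def CStep (J : List Atom) (n m : ℕ) : Prop := ∃ α ∈ J, AStep α n m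

/-- One step of a labelled transition system. -/
def TStep {Q : Type} (T : List (Q × Atom × Q)) (x y : Q × ℕ) : Prop :=
  ∃ α, (x.1, α, y.1) ∈ T ∧ AStep α x.2 y.2

/-- A relation is realized by a finite transition system. -/
def Realizable (R : ℕ → ℕ → Prop) : Prop :=
  ∃ (Q : Type) (_ : Finite Q) (T : List (Q × Atom × Q)) (s f : Q),
    ∀ n m, R n m ↔ ReflTransGen (TStep T) (s, n) (f, m)

theorem Realizable.atoms (J : List Atom) : Realizable (CStep J) := by
  refine ⟨Bool, inferInstance, J.map fun α => (false, α, true), false, true, fun n m => ?_⟩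
  constructor
  · rintro ⟨α, hα, h⟩
    exact .single ⟨α, by simpa using hα, h⟩
  · intro h
    have : ∀ y, ReflTransGen (TStep (J.map fun α => (false, α, true))) (false, n) y →
        (y.1 = false ∧ y.2 = n) ∨ (y.1 = true ∧ CStep J n y.2) := by
      intro y hy
      induction hy with
      | refl => simp
      | @tail y z _ hyz ih =>
        obtain ⟨α, hα, h⟩ := hyz
        simp only [List.mem_map, Prod.mk.injEq] at hα
        obtain ⟨β, hβ, h1, rfl, h2⟩ := hα
        rcases ih with ⟨h3, h4⟩ | ⟨h3, h4⟩
        · exact Or.inr ⟨h2.symm, β, hβ, h4 ▸ h⟩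
        · rw [h3] at h1; cases h1
    simpa using this _ h

theorem AStep.id_iff {n m : ℕ} : AStep (1, 0, 1, 0) n m ↔ m = n := by
  simp [AStep]

theorem TStep.lift {Q Q' : Type} {T : List (Q × Atom × Q)} {T' : List (Q' × Atom × Q')}
    (φ : Q → Q') (h : ∀ x ∈ T, (φ x.1, x.2.1, φ x.2.2) ∈ T') {x y : Q × ℕ}
    (hxy : ReflTransGen (TStep T) x y) :
    ReflTransGen (TStep T') (φ x.1, x.2) (φ y.1, y.2) := by
  induction hxy with
  | refl => exact .refl
  | tail _ hyz ih =>
    obtain ⟨α, hα, h'⟩ := hyz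
    exact ih.tail ⟨α, h _ hα, h'⟩

theorem Realizable.seq {R S : ℕ → ℕ → Prop} (hR : Realizable R) (hS : Realizable S) :
    Realizable fun n m => ∃ k, R n k ∧ S k m := by
  obtain ⟨Q, _, T, s, f, h⟩ := hR
  obtain ⟨Q', _, T', s', f', h'⟩ := hS
  let U : List ((Q ⊕ Q') × Atom × (Q ⊕ Q')) :=
    (Sum.inl f, (1, 0, 1, 0), Sum.inr s') ::
      (T.map (fun x => (Sum.inl x.1, x.2.1, Sum.inl x.2.2)) ++
        T'.map (fun x => (Sum.inr x.1, x.2.1, Sum.inr x.2.2)))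
  refine ⟨Q ⊕ Q', inferInstance, U, .inl s, .inr f', fun n m => ?_⟩
  constructor
  · rintro ⟨k, h1, h2⟩
    have e1 := TStep.lift (T' := U) Sum.inl (by
      intro x hx
      exact List.mem_cons_of_mem _ (List.mem_append_left _ (List.mem_map.2 ⟨x, hx, rfl⟩)))
      ((h _ _).1 h1)
    have e2 := TStep.lift (T' := U) Sum.inr (by
      intro x hx
      exact List.mem_cons_of_mem _ (List.mem_append_right _ (List.mem_map.2 ⟨x, hx, rfl⟩)))
      ((h' _ _).1 h2)
    have e0 : TStep U (Sum.inl f, k) (Sum.inr s', k) :=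
      ⟨(1, 0, 1, 0), List.mem_cons_self, AStep.id_iff.2 rfl⟩
    exact (e1.tail e0).trans e2
  · intro hp
    have : ∀ y, ReflTransGen (TStep U) (Sum.inl s, n) y →
        (∃ q, y.1 = .inl q ∧ ReflTransGen (TStep T) (s, n) (q, y.2)) ∨
        (∃ q k, y.1 = .inr q ∧ R n k ∧ ReflTransGen (TStep T') (s', k) (q, y.2)) := by
      intro y hy
      induction hy with
      | refl => exact Or.inl ⟨s, rfl, .refl⟩
      | @tail y z _ hyz ih =>
        obtain ⟨α, hα, hst⟩ := hyz
        simp only [U, List.mem_cons, List.mem_append, List.mem_map, Prod.mk.injEq] at hα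
        rcases hα with ⟨h1, rfl, h2⟩ | ⟨x, hx, h1, rfl, h2⟩ | ⟨x, hx, h1, rfl, h2⟩
        · rw [AStep.id_iff] at hst
          rcases ih with ⟨q, h3, h4⟩ | ⟨q, k, h3, h4⟩
          · obtain rfl : f = q := by rw [h1] at h3; simpa using h3
            exact Or.inr ⟨s', y.2, h2, (h _ _).2 h4, by rw [hst]⟩
          · rw [h1] at h3; cases h3
        · rcases ih with ⟨q, h3, h4⟩ | ⟨q, k, h3, h4⟩
          · obtain rfl : x.1 = q := by rw [← h1] at h3; simpa using h3
            exact Or.inl ⟨_, h2.symm, h4.tail ⟨x.2.1, hx, hst⟩⟩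
          · rw [← h1] at h3; cases h3
        · rcases ih with ⟨q, h3, h4⟩ | ⟨q, k, h3, h4, h5⟩
          · rw [← h1] at h3; cases h3
          · obtain rfl : x.1 = q := by rw [← h1] at h3; simpa using h3
            exact Or.inr ⟨_, k, h2.symm, h4, h5.tail ⟨x.2.1, hx, hst⟩⟩
    rcases this _ hp with ⟨q, h1, -⟩ | ⟨q, k, h1, h2, h3⟩
    · cases h1
    · simp only [Sum.inr.injEq] at h1
      subst h1
      exact ⟨k, h2, (h' _ _).2 h3⟩

theorem Realizable.star {R : ℕ → ℕ → Prop} (hR : Realizable R) :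
    Realizable (ReflTransGen R) := by
  obtain ⟨Q, _, T, s, f, h⟩ := hR
  let U : List (Option Q × Atom × Option Q) :=
    (none, (1, 0, 1, 0), some s) :: (some f, (1, 0, 1, 0), none) ::
      T.map (fun x => (some x.1, x.2.1, some x.2.2))
  refine ⟨Option Q, inferInstance, U, none, none, fun n m => ?_⟩
  constructor
  · intro hp
    induction hp with
    | refl => exact .refl
    | @tail k m _ hkm ih =>
      have e1 := TStep.lift (T' := U) some (by
        intro x hx
        exact List.mem_cons_of_mem _ (List.mem_cons_of_mem _ (List.mem_map.2 ⟨x, hx, rfl⟩)))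
        ((h _ _).1 hkm)
      have e0 : TStep U (none, k) (some s, k) :=
        ⟨(1, 0, 1, 0), List.mem_cons_self, AStep.id_iff.2 rfl⟩
      have e2 : TStep U (some f, m) (none, m) :=
        ⟨(1, 0, 1, 0), List.mem_cons_of_mem _ List.mem_cons_self, AStep.id_iff.2 rfl⟩
      exact ((ih.tail e0).trans e1).tail e2
  · intro hp
    have : ∀ y, ReflTransGen (TStep U) (none, n) y →
        (y.1 = none ∧ ReflTransGen R n y.2) ∨
        (∃ q k, y.1 = some q ∧ ReflTransGen R n k ∧ ReflTransGen (TStep T) (s, k) (q, y.2)) := by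
      intro y hy
      induction hy with
      | refl => exact Or.inl ⟨rfl, .refl⟩
      | @tail y z _ hyz ih =>
        obtain ⟨α, hα, hst⟩ := hyz
        simp only [U, List.mem_cons, List.mem_map, Prod.mk.injEq] at hα
        rcases hα with ⟨h1, rfl, h2⟩ | ⟨h1, rfl, h2⟩ | ⟨x, hx, h1, rfl, h2⟩
        · rw [AStep.id_iff] at hst
          rcases ih with ⟨h3, h4⟩ | ⟨q, k, h3, h4⟩
          · exact Or.inr ⟨s, y.2, h2, h4, by rw [hst]⟩
          · rw [h1] at h3; cases h3
        · rw [AStep.id_iff] at hst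
          rcases ih with ⟨h3, h4⟩ | ⟨q, k, h3, h4, h5⟩
          · rw [h1] at h3; cases h3
          · obtain rfl : f = q := by rw [h1] at h3; simpa using h3
            exact Or.inl ⟨h2, hst ▸ h4.tail ((h _ _).2 h5)⟩
        · rcases ih with ⟨h3, h4⟩ | ⟨q, k, h3, h4, h5⟩
          · rw [← h1] at h3; cases h3
          · obtain rfl : x.1 = q := by rw [← h1] at h3; simpa using h3
            exact Or.inr ⟨_, k, h2.symm, h4, h5.tail ⟨x.2.1, hx, hst⟩⟩
    rcases this _ hp with ⟨h1, h2⟩ | ⟨q, k, h1, -⟩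
    · exact h2
    · cases h1

/-! ### Goedel numbering of counter programs -/

/-- The `i`-th prime. -/
noncomputable def pr (i : ℕ) : ℕ := Nat.nth Nat.Prime i

theorem pr_prime (i : ℕ) : (pr i).Prime := Nat.prime_nth_prime i

/-- Number semantics of programs. -/
noncomputable def nsem : Prog → ℕ → ℕ → Prop
  | .skip => fun n m => m = n
  | .inc i => fun n m => m = pr i * n
  | .dec i => fun n m => n = pr i * m
  | .tst i => fun n m => ¬ pr i ∣ n ∧ m = n
  | .seq P Q => fun n m => ∃ k, nsem P n k ∧ nsem Q k m
  | .star P => fun n m => ReflTransGen (nsem P) n m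

/-- The registers encoded by a number. -/
noncomputable def reg (n : ℕ) (i : ℕ) : ℕ := n.factorization (pr i)

theorem reg_mul (i n : ℕ) (hn : n ≠ 0) : reg (pr i * n) = update (reg n) i (reg n i + 1) := by
  funext j
  simp only [reg, update_apply]
  rw [Nat.factorization_mul (pr_prime i).ne_zero hn, (pr_prime i).factorization]
  simp only [Finsupp.add_apply, Finsupp.single_apply]
  have : pr i = pr j ↔ j = i := by
    constructor
    · intro h; exact (Nat.nth_injective Nat.infinite_setOfPred_prime h).symm
    · rintro rfl; rfl
  simp only [this]
  split_ifs with h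
  · subst h; omega
  · omega

theorem reg_inj {n m : ℕ} (hn : n ≠ 0) (hm : m ≠ 0) (h : reg n = reg m) : n = m := by
  refine Nat.eq_of_factorization_eq hn hm fun p => ?_
  by_cases hp : p.Prime
  · have := congrFun h (Nat.count Nat.Prime p)
    simpa [reg, pr, Nat.nth_count hp] using this
  · rw [Nat.factorization_eq_zero_of_not_prime _ hp, Nat.factorization_eq_zero_of_not_prime _ hp]

theorem reg_eq_zero_iff {n i : ℕ} (hn : n ≠ 0) : reg n i = 0 ↔ ¬ pr i ∣ n := by
  rw [reg, Nat.factorization_eq_zero_iff]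
  simp [pr_prime, hn]

theorem sem_of_nsem (P : Prog) : ∀ {n m : ℕ}, n ≠ 0 → nsem P n m →
    m ≠ 0 ∧ sem P (reg n) (reg m) := by
  induction P with
  | skip => rintro n m hn rfl; exact ⟨hn, rfl⟩
  | inc i =>
    rintro n m hn rfl
    exact ⟨mul_ne_zero (pr_prime i).ne_zero hn, reg_mul i n hn⟩
  | dec i =>
    rintro n m hn rfl
    have hm : m ≠ 0 := right_ne_zero_of_mul hn
    refine ⟨hm, reg m i, ?_, ?_⟩
    · rw [reg_mul i m hm]; simp
    · rw [reg_mul i m hm]; simp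
  | tst i =>
    rintro n m hn ⟨h, rfl⟩
    exact ⟨hn, (reg_eq_zero_iff hn).2 h, rfl⟩
  | seq P Q hP hQ =>
    rintro n m hn ⟨k, h1, h2⟩
    obtain ⟨hk, e1⟩ := hP hn h1
    obtain ⟨hm, e2⟩ := hQ hk h2
    exact ⟨hm, _, e1, e2⟩
  | star P hP =>
    intro n m hn h
    simp only [nsem] at h
    simp only [sem]
    induction h with
    | refl => exact ⟨hn, .refl⟩
    | tail _ hst ih =>
      obtain ⟨h1, h2⟩ := hP ih.1 hst
      exact ⟨h1, ih.2.tail h2⟩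

theorem nsem_of_sem (P : Prog) : ∀ {n : ℕ} {s : ℕ → ℕ}, n ≠ 0 → sem P (reg n) s →
    ∃ m, m ≠ 0 ∧ reg m = s ∧ nsem P n m := by
  induction P with
  | skip => rintro n s hn rfl; exact ⟨n, hn, rfl, rfl⟩
  | inc i =>
    rintro n s hn rfl
    exact ⟨_, mul_ne_zero (pr_prime i).ne_zero hn, reg_mul i n hn, rfl⟩
  | dec i =>
    rintro n s hn ⟨k, hk, rfl⟩
    have hd : pr i ∣ n := by
      by_contra h
      rw [← reg_eq_zero_iff hn] at h
      omega
    obtain ⟨m, rfl⟩ := hd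
    have hm : m ≠ 0 := right_ne_zero_of_mul hn
    refine ⟨m, hm, ?_, rfl⟩
    rw [reg_mul i m hm] at hk ⊢
    obtain rfl : reg m i = k := by simpa using hk
    simp
  | tst i =>
    rintro n s hn ⟨h, rfl⟩
    exact ⟨n, hn, rfl, (reg_eq_zero_iff hn).1 h, rfl⟩
  | seq P Q hP hQ =>
    rintro n s hn ⟨k, h1, h2⟩
    obtain ⟨m, hm, rfl, e1⟩ := hP hn h1
    obtain ⟨m', hm', rfl, e2⟩ := hQ hm h2
    exact ⟨m', hm', rfl, m, e1, e2⟩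
  | star P hP =>
    intro n s hn h
    simp only [sem] at h
    simp only [nsem]
    induction h with
    | refl => exact ⟨n, hn, rfl, .refl⟩
    | tail _ hst ih =>
      obtain ⟨m, hm, rfl, e1⟩ := ih
      obtain ⟨m', hm', rfl, e2⟩ := hP hm hst
      exact ⟨m', hm', rfl, e1.tail e2⟩

theorem realizable_nsem (P : Prog) : Realizable (nsem P) := by
  have ext : ∀ {R S : ℕ → ℕ → Prop}, Realizable R → (∀ n m, R n m ↔ S n m) → Realizable S := by
    intro R S h hRS
    obtain rfl : R = S := by funext n m; exact propext (hRS n m)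
    exact h
  induction P with
  | skip =>
    refine ext (Realizable.atoms [(1, 0, 1, 0)]) fun n m => ?_
    simp [CStep, AStep.id_iff, nsem]
  | inc i =>
    refine ext (Realizable.atoms [(1, 0, pr i, 0)]) fun n m => ?_
    simp [CStep, AStep, nsem]
  | dec i =>
    refine ext (Realizable.atoms [(pr i, 0, 1, 0)]) fun n m => ?_
    simp [CStep, AStep, nsem]
  | tst i =>
    refine ext (Realizable.atoms ((List.range (pr i - 1)).map fun r => (pr i, r + 1, pr i, r + 1)))
      fun n m => ?_
    simp only [CStep, AStep, nsem, List.mem_map, List.mem_range]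
    have hp := (pr_prime i).pos
    constructor
    · rintro ⟨α, ⟨r, hr, rfl⟩, k, rfl, rfl⟩
      refine ⟨?_, rfl⟩
      simp only
      rw [Nat.dvd_add_right (Dvd.intro _ rfl)]
      intro h
      have := Nat.le_of_dvd (by omega) h
      omega
    · rintro ⟨h, rfl⟩
      have h0 : m % pr i ≠ 0 := fun h' => h (Nat.dvd_of_mod_eq_zero h')
      have h1 := Nat.mod_lt m hp
      have h2 := Nat.div_add_mod m (pr i)
      exact ⟨_, ⟨m % pr i - 1, by omega, rfl⟩, m / pr i, by simp only; omega, by simp only; omega⟩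
  | seq P Q hP hQ => exact hP.seq hQ
  | star P hP => exact hP.star

theorem nsem_iff (P : Prog) (n : ℕ) :
    nsem P (2 ^ n) 1 ↔ sem P (update (fun _ => 0) 0 n) (fun _ => 0) := by
  have h1 : reg 1 = fun _ => 0 := by funext i; simp [reg]
  have h2 : reg (2 ^ n) = update (fun _ => 0) 0 n := by
    have hp0 : pr 0 = 2 := Nat.nth_prime_zero_eq_two
    induction n with
    | zero => rw [pow_zero, h1]; simp
    | succ n ih =>
      have := reg_mul 0 (2 ^ n) (by positivity)
      rw [hp0] at this
      rw [pow_succ', this, ih]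
      simp
  rw [← h2, ← h1]
  constructor
  · intro h
    exact (sem_of_nsem P (by positivity) h).2
  · intro h
    obtain ⟨m, hm, e1, e2⟩ := nsem_of_sem P (by positivity) h
    rwa [← reg_inj hm one_ne_zero e1]

/-- Undecidability of reachability for a finite family of affine partial maps. -/
theorem exists_affine : ∃ (J : List Atom) (N s τ : ℕ),
    ¬ ComputablePred fun n : ℕ => ReflTransGen (CStep J) (N * 2 ^ n + s) τ := by
  obtain ⟨P, hP⟩ := exists_prog
  obtain ⟨Q, _, T, s, f, h⟩ := realizable_nsem P
  obtain ⟨N, ⟨e⟩⟩ := Finite.exists_equiv_fin Q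
  let J : List Atom := T.map fun x =>
    (N * x.2.1.1, N * x.2.1.2.1 + e x.1, N * x.2.1.2.2.1, N * x.2.1.2.2.2 + e x.2.2)
  have hinj : ∀ (n n' : ℕ) (q q' : Q), N * n + e q = N * n' + e q' → n = n' ∧ q = q' := by
    intro n n' q q' hh
    have h1 := (e q).2
    have h2 := (e q').2
    have hN : 0 < N := by omega
    have e1 : (N * n + e q) / N = n := by
      rw [Nat.mul_add_div hN, Nat.div_eq_of_lt h1, add_zero]
    have e2 : (N * n' + e q') / N = n' := by
      rw [Nat.mul_add_div hN, Nat.div_eq_of_lt h2, add_zero]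
    have e3 : n = n' := by rw [← e1, ← e2, hh]
    subst e3
    refine ⟨rfl, e.injective (Fin.ext ?_)⟩
    omega
  have step : ∀ q n y, CStep J (N * n + e q) y ↔
      ∃ q' n', y = N * n' + e q' ∧ TStep T (q, n) (q', n') := by
    intro q n y
    constructor
    · rintro ⟨α, hα, k, hk, rfl⟩
      obtain ⟨x, hx, rfl⟩ := List.mem_map.1 hα
      simp only at hk
      have hk' : N * n + e q = N * (x.2.1.1 * k + x.2.1.2.1) + e x.1 := by rw [hk]; ring
      obtain ⟨rfl, rfl⟩ := hinj _ _ _ _ hk'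
      exact ⟨x.2.2, x.2.1.2.2.1 * k + x.2.1.2.2.2, by simp only; ring, x.2.1, hx, k, rfl, rfl⟩
    · rintro ⟨q', n', rfl, α, hα, k, hk, hk'⟩
      refine ⟨_, List.mem_map.2 ⟨_, hα, rfl⟩, k, ?_, ?_⟩
      · simp only at hk ⊢; rw [hk]; ring
      · simp only at hk' ⊢; rw [hk']; ring
  refine ⟨J, N, e s, N * 1 + e f, fun hc => hP (hc.of_eq fun n => ?_)⟩
  rw [← nsem_iff, h]
  constructor
  · intro hr
    have : ∀ y, ReflTransGen (CStep J) (N * 2 ^ n + e s) y →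
        ∃ q m, y = N * m + e q ∧ ReflTransGen (TStep T) (s, 2 ^ n) (q, m) := by
      intro y hy
      induction hy with
      | refl => exact ⟨_, _, rfl, .refl⟩
      | tail _ hst ih =>
        obtain ⟨q, m, rfl, h1⟩ := ih
        obtain ⟨q', m', rfl, h2⟩ := (step _ _ _).1 hst
        exact ⟨_, _, rfl, h1.tail h2⟩
    obtain ⟨q, m, h1, h2⟩ := this _ hr
    obtain ⟨rfl, rfl⟩ := hinj _ _ _ _ h1
    exact h2
  · intro hr
    have : ∀ y, ReflTransGen (TStep T) (s, 2 ^ n) y →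
        ReflTransGen (CStep J) (N * 2 ^ n + e s) (N * y.2 + e y.1) := by
      intro y hy
      induction hy with
      | refl => exact .refl
      | tail _ hst ih => exact ih.tail ((step _ _ _).2 ⟨_, _, rfl, hst⟩)
    exact this _ hr

end OneRel


namespace OneRel
open Function Relation

/-! ## Part C: the congruence side -/

section words
variable {B : Type*}

lemma wInv_one : wInv (1 : FreeMonoid (B × Bool)) = 1 := rfl

lemma wInv_mul (u v : FreeMonoid (B × Bool)) : wInv (u * v) = wInv v * wInv u := by
  simp only [wInv, FreeMonoid.toList_mul, List.map_append, List.reverse_append,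
    FreeMonoid.ofList_append]

lemma wInv_of (x : B × Bool) : wInv (FreeMonoid.of x) = FreeMonoid.of (x.1, !x.2) := rfl

lemma wInv_wInv (u : FreeMonoid (B × Bool)) : wInv (wInv u) = u := by
  induction u using FreeMonoid.inductionOn' with
  | one => rfl
  | of_mul x u ih => simp [wInv_mul, wInv_of, ih]

/-- The free group element spelled by a word. -/
def fgHom (B : Type*) : FreeMonoid (B × Bool) →* FreeGroup B where
  toFun u := FreeGroup.mk (FreeMonoid.toList u)
  map_one' := rfl
  map_mul' u v := by rw [FreeGroup.mul_mk]; rfl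

lemma fgHom_wInv (u : FreeMonoid (B × Bool)) : fgHom B (wInv u) = (fgHom B u)⁻¹ := by
  rfl

lemma fgHom_idem (u : FreeMonoid (B × Bool)) : fgHom B (u * wInv u) = 1 := by
  rw [map_mul, fgHom_wInv, mul_inv_cancel]

/-- The product of the idempotents `s s⁻¹`. -/
def idemProd (S : List (FreeMonoid (B × Bool))) : FreeMonoid (B × Bool) :=
  (S.map fun s => s * wInv s).prod

lemma fgHom_idemProd (S : List (FreeMonoid (B × Bool))) : fgHom B (idemProd S) = 1 := by
  induction S with
  | nil => rfl
  | cons s S ih =>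
    rw [idemProd, List.map_cons, List.prod_cons, map_mul, fgHom_idem, one_mul]
    exact ih

variable (σ : Con (FreeMonoid (B × Bool))) 

/-- The set of idempotents of the quotient. -/
def EE : Set σ.Quotient := {m | ∃ s, m = σ.mk' (s * wInv s)}

variable {σ} (hV : ∀ x y, vagnerRel B x y → σ x y)
include hV

lemma v_reg (s : FreeMonoid (B × Bool)) : σ.mk' (s * wInv s * s) = σ.mk' s :=
  (Con.eq σ).2 (hV _ _ (Or.inl ⟨s, rfl, rfl⟩))

lemma v_comm (s u : FreeMonoid (B × Bool)) :
    σ.mk' (s * wInv s) * σ.mk' (u * wInv u) = σ.mk' (u * wInv u) * σ.mk' (s * wInv s) := by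
  rw [← map_mul, ← map_mul]
  exact (Con.eq σ).2 (hV _ _ (Or.inr ⟨u, s, rfl, rfl⟩))

lemma v_idem (s : FreeMonoid (B × Bool)) :
    σ.mk' (s * wInv s) * σ.mk' (s * wInv s) = σ.mk' (s * wInv s) := by
  rw [← map_mul, ← mul_assoc, map_mul, v_reg hV, ← map_mul]

lemma v_key (X s Y : FreeMonoid (B × Bool)) :
    σ.mk' (X * (s * wInv s) * Y) = σ.mk' ((X * s) * wInv (X * s)) * σ.mk' (X * Y) := by
  have h := v_comm hV (wInv X) s
  rw [wInv_wInv] at h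
  calc σ.mk' (X * (s * wInv s) * Y)
      = σ.mk' (X * wInv X * X) * σ.mk' (s * wInv s) * σ.mk' Y := by
        rw [v_reg hV]; simp only [map_mul]
    _ = σ.mk' X * (σ.mk' (wInv X * X) * σ.mk' (s * wInv s)) * σ.mk' Y := by
        simp only [map_mul, mul_assoc]
    _ = _ := by
        rw [h]; simp only [wInv_mul, map_mul, mul_assoc]

lemma EE_one : (1 : σ.Quotient) ∈ EE σ := ⟨1, rfl⟩

omit hV in
lemma EE_mul {x y : σ.Quotient} (hx : x ∈ EE σ) (hy : y ∈ EE σ) 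
    (hV : ∀ x y, vagnerRel B x y → σ x y) : x * y ∈ EE σ := by
  obtain ⟨s, rfl⟩ := hx
  obtain ⟨u, rfl⟩ := hy
  refine ⟨s * wInv s * u, ?_⟩
  have h := v_idem hV s
  have h' := v_comm hV s u
  simp only [wInv_mul, wInv_wInv] 
  calc σ.mk' (s * wInv s) * σ.mk' (u * wInv u) 
      = (σ.mk' (s * wInv s) * σ.mk' (s * wInv s)) * σ.mk' (u * wInv u) := by rw [h]
    _ = σ.mk' (s * wInv s) * (σ.mk' (u * wInv u) * σ.mk' (s * wInv s)) := by rw [mul_assoc, h']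
    _ = _ := by simp only [map_mul, mul_assoc]

lemma EE_idem {x : σ.Quotient} (hx : x ∈ EE σ) : x * x = x := by
  obtain ⟨s, rfl⟩ := hx
  exact v_idem hV s

lemma EE_comm {x y : σ.Quotient} (hx : x ∈ EE σ) (hy : y ∈ EE σ) : x * y = y * x := by
  obtain ⟨s, rfl⟩ := hx
  obtain ⟨u, rfl⟩ := hy
  exact v_comm hV s u

lemma EE_idemProd (S : List (FreeMonoid (B × Bool))) : σ.mk' (idemProd S) ∈ EE σ := by
  induction S with
  | nil => exact ⟨1, rfl⟩
  | cons s S ih =>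
    rw [idemProd, List.map_cons, List.prod_cons, map_mul]
    exact EE_mul ⟨s, rfl⟩ ih hV

lemma idem_mul_idemProd (S : List (FreeMonoid (B × Bool))) (s) (hs : s ∈ S) :
    σ.mk' (s * wInv s) * σ.mk' (idemProd S) = σ.mk' (idemProd S) := by
  induction S with
  | nil => simp at hs
  | cons u S ih =>
    have e : idemProd (u :: S) = u * wInv u * idemProd S := by
      rw [idemProd, List.map_cons, List.prod_cons]; rfl
    rw [e, map_mul _ (u * wInv u)]
    rcases List.mem_cons.1 hs with rfl | h
    · rw [← mul_assoc, v_idem hV]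
    · rw [← mul_assoc, v_comm hV, mul_assoc, ih h]

lemma rel_consequences (S : List (FreeMonoid (B × Bool))) (ρ : FreeMonoid (B × Bool))
    (hw : σ (idemProd S * ρ) 1) :
    σ.mk' ρ = 1 ∧ ∀ s ∈ S, σ.mk' (s * wInv s) = 1 := by
  have h1 : σ.mk' (idemProd S) * σ.mk' ρ = 1 := by
    rw [← map_mul, ← map_one σ.mk']; exact (Con.eq σ).2 hw
  have h2 := EE_idem hV (EE_idemProd hV S)
  have h3 : σ.mk' (idemProd S) = 1 := by
    calc σ.mk' (idemProd S) = σ.mk' (idemProd S) * (σ.mk' (idemProd S) * σ.mk' ρ) := by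
          rw [h1, mul_one]
      _ = 1 := by rw [← mul_assoc, h2, h1]
  refine ⟨by rwa [h3, one_mul] at h1, fun s hs => ?_⟩
  have := idem_mul_idemProd hV S s hs
  rwa [h3, mul_one] at this

/-- A right invertible word `s` satisfies `s s⁻¹ = 1`. -/
lemma mul_wInv_of_rightInv (s : FreeMonoid (B × Bool)) (y : σ.Quotient)
    (h : σ.mk' s * y = 1) : σ.mk' (s * wInv s) = 1 := by
  calc σ.mk' (s * wInv s) = σ.mk' (s * wInv s) * (σ.mk' s * y) := by rw [h, mul_one]
    _ = σ.mk' (s * wInv s * s) * y := by rw [← mul_assoc, ← map_mul]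
    _ = 1 := by rw [v_reg hV, h]

lemma rightInv_of_cancel (X s Y : σ.Quotient) (s' : FreeMonoid (B × Bool))
    (hs : s = σ.mk' (s' * wInv s')) 
    (h : ∃ y, X * s * Y * y = 1) : ∃ y, X * Y * y = 1 := by
  obtain ⟨x, rfl⟩ := Con.mk'_surjective X
  obtain ⟨z, rfl⟩ := Con.mk'_surjective Y
  subst hs
  obtain ⟨y, h⟩ := h
  refine ⟨y, ?_⟩
  rw [← map_mul, ← map_mul, v_key hV] at h
  have h1 : σ.mk' ((x * s') * wInv (x * s')) = 1 := by
    set f := σ.mk' ((x * s') * wInv (x * s')) with hf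
    have : f * f = f := v_idem hV _
    calc f = f * (f * σ.mk' (x * z) * y) := by rw [h, mul_one]
      _ = f * f * σ.mk' (x * z) * y := by simp only [mul_assoc]
      _ = 1 := by rw [this, h]
  rw [h1, one_mul] at h
  rwa [← map_mul]

lemma EE_of_cancel (X s Y : σ.Quotient) (s' : FreeMonoid (B × Bool))
    (hs : s = σ.mk' (s' * wInv s')) (h : X * Y ∈ EE σ) : X * s * Y ∈ EE σ := by
  obtain ⟨x, rfl⟩ := Con.mk'_surjective X
  obtain ⟨z, rfl⟩ := Con.mk'_surjective Y
  subst hs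
  rw [← map_mul, ← map_mul, v_key hV]
  rw [← map_mul] at h
  exact EE_mul ⟨_, rfl⟩ h hV

end words

section group
variable {k : ℕ}

/-- Inclusion of words in the group letters. -/
def inc (k : ℕ) : FreeMonoid (Fin k × Bool) →* FreeMonoid (Fin (k + 1) × Bool) :=
  FreeMonoid.map fun x => (Fin.succ x.1, x.2)

lemma inc_wInv (u : FreeMonoid (Fin k × Bool)) : inc k (wInv u) = wInv (inc k u) := by
  induction u using FreeMonoid.inductionOn' with
  | one => rfl
  | of_mul x u ih => rw [wInv_mul, map_mul, map_mul, wInv_mul, ih]; rfl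

/-- The stable letter and its inverse. -/
def tl (k : ℕ) (b : Bool) : FreeMonoid (Fin (k + 1) × Bool) := FreeMonoid.of (0, b)

variable {σ : Con (FreeMonoid (Fin (k + 1) × Bool))}
  (hU : ∀ i b, σ.mk' (inc k (FreeMonoid.of (i, b))) * σ.mk' (inc k (FreeMonoid.of (i, !b))) = 1)

/-- The unit represented by a group letter. -/
def unitOf (i : Fin k) : (σ.Quotient)ˣ where
  val := σ.mk' (inc k (FreeMonoid.of (i, true)))
  inv := σ.mk' (inc k (FreeMonoid.of (i, false)))
  val_inv := hU i true
  inv_val := hU i false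

lemma lift_unitOf (u : FreeMonoid (Fin k × Bool)) :
    ((FreeGroup.lift (unitOf hU) (fgHom (Fin k) u) : (σ.Quotient)ˣ) : σ.Quotient)
      = σ.mk' (inc k u) := by
  induction u using FreeMonoid.inductionOn' with
  | one => rw [map_one, map_one, map_one, map_one]; rfl
  | of_mul x u ih =>
    rw [map_mul, map_mul, map_mul, map_mul, Units.val_mul, ih]
    congr 1
    obtain ⟨i, b⟩ := x
    have : fgHom (Fin k) (FreeMonoid.of (i, b)) = FreeGroup.mk [(i, b)] := rfl
    rw [this, FreeGroup.lift_mk]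
    cases b <;> simp [unitOf]

variable {r : FreeMonoid (Fin k × Bool)} (hR : σ.mk' (inc k r) = 1)

/-- The base group. -/
abbrev GG (r : FreeMonoid (Fin k × Bool)) : Type := PresentedGroup {fgHom (Fin k) r}

/-- The map from the base group to the units of the monoid. -/
def kap : GG r →* (σ.Quotient)ˣ :=
  PresentedGroup.toGroup (f := unitOf hU) (by
    intro x hx
    rw [Set.mem_singleton_iff] at hx
    subst hx
    apply Units.ext
    rw [lift_unitOf, hR]; rfl)

/-- The element of the base group spelled by a word. -/
def gg (r : FreeMonoid (Fin k × Bool)) : FreeMonoid (Fin k × Bool) →* GG r :=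
  (PresentedGroup.mk _).comp (fgHom (Fin k))

lemma gg_surj : Surjective (gg r) := by
  intro x
  obtain ⟨y, rfl⟩ := PresentedGroup.mk_surjective _ x
  induction y using Quot.inductionOn with
  | h L => exact ⟨FreeMonoid.ofList L, rfl⟩

lemma gg_wInv (u) : gg r (wInv u) = (gg r u)⁻¹ := by
  simp only [gg, MonoidHom.comp_apply, fgHom_wInv, map_inv]

lemma gg_r : gg r r = 1 := 
  PresentedGroup.one_of_mem (Set.mem_singleton _)

lemma kap_gg (u : FreeMonoid (Fin k × Bool)) :
    ((kap hU hR (gg r u) : (σ.Quotient)ˣ) : σ.Quotient) = σ.mk' (inc k u) :=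
  lift_unitOf hU u

/-- The maximal group image as an HNN extension with trivial associated subgroups. -/
abbrev HH (r : FreeMonoid (Fin k × Bool)) : Type :=
  HNNExtension (GG r) ⊥ ⊥ (MulEquiv.refl _)

/-- The map from the free group. -/
def alp (r : FreeMonoid (Fin k × Bool)) : FreeGroup (Fin (k + 1)) →* HH r :=
  FreeGroup.lift (Fin.cases HNNExtension.t fun i => HNNExtension.of (PresentedGroup.of i))

lemma alp_inc (u : FreeMonoid (Fin k × Bool)) :
    alp r (fgHom _ (inc k u)) = HNNExtension.of (gg r u) := by
  induction u using FreeMonoid.inductionOn' with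
  | one => simp
  | of_mul x u ih =>
    rw [map_mul, map_mul, map_mul, map_mul, map_mul, ih]
    congr 1
    obtain ⟨i, b⟩ := x
    have : fgHom (Fin (k+1)) (inc k (FreeMonoid.of (i, b))) = FreeGroup.mk [(i.succ, b)] := rfl
    rw [this, alp, FreeGroup.lift_mk]
    have : gg r (FreeMonoid.of (i, b)) = PresentedGroup.mk _ (FreeGroup.mk [(i, b)]) := rfl
    rw [this]
    cases b
    · have : FreeGroup.mk [(i, false)] = (FreeGroup.of i)⁻¹ := rfl
      rw [this, map_inv, map_inv]; simp; rfl
    · simp; rfl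

/-- The letter sign. -/
def sg (b : Bool) : ℤˣ := if b then 1 else -1

/-- The stable letter in the quotient. -/
def Tq (σ : Con (FreeMonoid (Fin (k + 1) × Bool))) (e : ℤˣ) : σ.Quotient :=
  σ.mk' (tl k (if e = 1 then true else false))

/-- The value of a normal form in the quotient monoid. -/
def val (g : GG r) (l : List (ℤˣ × GG r)) : σ.Quotient :=
  (kap hU hR g : σ.Quotient) * (l.map fun x => Tq σ x.1 * (kap hU hR x.2 : σ.Quotient)).prod

/-- The value of a normal form in the HNN extension. -/
def hval (g : GG r) (l : List (ℤˣ × GG r)) : HH r :=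
  HNNExtension.of g * (l.map fun x => HNNExtension.t ^ (x.1 : ℤ) * HNNExtension.of x.2).prod

lemma exists_form (u : FreeMonoid (Fin (k + 1) × Bool)) :
    ∃ g l, σ.mk' u = val hU hR g l ∧ alp r (fgHom _ u) = hval g l := by
  induction u using FreeMonoid.inductionOn' with
  | one => exact ⟨1, [], by simp [val], by simp [hval]⟩
  | of_mul x u ih =>
    obtain ⟨g, l, h1, h2⟩ := ih
    obtain ⟨i, b⟩ := x
    induction i using Fin.cases with
    | zero =>
      refine ⟨1, (sg b, g) :: l, ?_, ?_⟩
      · rw [map_mul, h1]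
        simp only [val, List.map_cons, List.prod_cons, map_one, Units.val_one, one_mul,
          ← mul_assoc]
        congr 2
        cases b <;> rfl
      · rw [map_mul, map_mul, h2]
        simp only [hval, List.map_cons, List.prod_cons, map_one, one_mul, ← mul_assoc]
        congr 2
        have : fgHom (Fin (k+1)) (FreeMonoid.of (0, b)) = FreeGroup.mk [(0, b)] := rfl
        rw [this, alp, FreeGroup.lift_mk]
        cases b <;> simp [sg]
    | succ i =>
      have e : (FreeMonoid.of (i.succ, b)) = inc k (FreeMonoid.of (i, b)) := rfl
      refine ⟨gg r (FreeMonoid.of (i, b)) * g, l, ?_, ?_⟩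
      · rw [map_mul, h1, e, ← kap_gg hU hR]
        simp only [val, map_mul, Units.val_mul, mul_assoc]
      · rw [map_mul, map_mul, h2, e, alp_inc]
        simp only [hval, map_mul, mul_assoc]

lemma Tq_cancel (e e' : ℤˣ) (h : e ≠ e') :
    ∃ s, Tq σ e * Tq σ e' = σ.mk' (s * wInv s) := by
  refine ⟨tl k (if e = 1 then true else false), ?_⟩
  rw [Tq, Tq, ← map_mul]
  congr 2
  rcases Int.units_eq_one_or e with rfl | rfl <;> rcases Int.units_eq_one_or e' with rfl | rfl
  · exact absurd rfl h
  · rfl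
  · rfl
  · exact absurd rfl h

lemma tpow_cancel (e e' : ℤˣ) (h : e ≠ e') :
    (HNNExtension.t ^ (e : ℤ) * HNNExtension.t ^ (e' : ℤ) : HH r) = 1 := by
  rcases Int.units_eq_one_or e with rfl | rfl <;> rcases Int.units_eq_one_or e' with rfl | rfl
  · exact absurd rfl h
  · simp
  · simp
  · exact absurd rfl h

lemma not_chain {α : Type*} {R : α → α → Prop} : ∀ {l : List α}, ¬ l.IsChain R →
    ∃ l1 a b l2, l = l1 ++ a :: b :: l2 ∧ ¬ R a b
  | [], h => absurd List.isChain_nil h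
  | [a], h => absurd (List.isChain_singleton a) h
  | a :: b :: l, h => by
    by_cases hab : R a b
    · have h' : ¬ (b :: l).IsChain R := fun h' => h (List.isChain_cons_cons.2 ⟨hab, h'⟩)
      obtain ⟨l1, c, d, l2, e, hr⟩ := not_chain h'
      exact ⟨a :: l1, c, d, l2, by rw [e]; rfl, hr⟩
    · exact ⟨[], a, b, l, rfl, hab⟩

lemma val_EE (hV : ∀ x y, vagnerRel (Fin (k + 1)) x y → σ x y) (n : ℕ) :
    ∀ (l : List (ℤˣ × GG r)) (g : GG r), l.length = n → hval g l = 1 →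
      val hU hR g l ∈ EE σ := by
  induction n using Nat.strong_induction_on with
  | _ n ih =>
  intro l g hl h1
  by_cases hc : l.IsChain (fun a b => a.2 ∈ HNNExtension.toSubgroup (⊥ : Subgroup (GG r)) ⊥ a.1 →
      a.1 = b.1)
  · let rw : HNNExtension.NormalWord.ReducedWord (GG r) ⊥ ⊥ := ⟨g, l, hc⟩
    have hrw : rw.prod (MulEquiv.refl _) = 1 := h1
    have := HNNExtension.ReducedWord.toList_eq_nil_of_mem_of_range (MulEquiv.refl _) rw
      (by rw [hrw]; exact one_mem _)
    have hl0 : l = [] := this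
    subst hl0
    have hg : g = 1 := by
      apply HNNExtension.of_injective (φ := MulEquiv.refl (⊥ : Subgroup (GG r)))
      simpa [hval] using h1
    subst hg
    have : val hU hR 1 [] = 1 := by simp [val]
    rw [this]
    exact EE_one hV
  · obtain ⟨l1, ⟨e, x⟩, ⟨e', y⟩, l2, rfl, hn⟩ := not_chain hc
    simp only [Classical.not_imp] at hn
    obtain ⟨hx, hne⟩ := hn
    have hx1 : x = 1 := by
      rcases Int.units_eq_one_or e with rfl | rfl <;>
      simpa [HNNExtension.toSubgroup, Subgroup.mem_bot] using hx
    subst hx1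
    obtain ⟨s, hs⟩ := Tq_cancel (σ := σ) e e' hne
    have ht := tpow_cancel (r := r) e e' hne
    rcases List.eq_nil_or_concat l1 with rfl | ⟨l0, ⟨e0, z⟩, rfl⟩
    · have h2 : hval (g * y) l2 = 1 := by
        rw [← h1]
        simp only [hval, List.nil_append, List.map_cons, List.prod_cons, map_one, mul_one, map_mul]
        simp only [mul_assoc]
        rw [← mul_assoc (HNNExtension.t ^ (e : ℤ)) (HNNExtension.t ^ (e' : ℤ)), ht, one_mul]
      have h3 := ih l2.length (by subst hl; simp) l2 (g * y) rfl h2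
      have h4 := EE_of_cancel hV (kap hU hR g : σ.Quotient) (Tq σ e * Tq σ e')
        ((kap hU hR y : σ.Quotient) *
          (l2.map fun x => Tq σ x.1 * (kap hU hR x.2 : σ.Quotient)).prod) s hs (by
          simpa only [val, map_mul, Units.val_mul, mul_assoc] using h3)
      simpa only [val, List.nil_append, List.map_cons, List.prod_cons, map_one, Units.val_one,
        mul_one, mul_assoc] using h4
    · have h2 : hval g (l0 ++ (e0, z * y) :: l2) = 1 := by
        rw [← h1]
        simp only [hval, List.concat_eq_append, List.map_append, List.prod_append,
          List.map_cons, List.prod_cons, map_one, mul_one, map_mul, List.map_nil, List.prod_nil]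
        simp only [mul_assoc]
        rw [← mul_assoc (HNNExtension.t ^ (e : ℤ)) (HNNExtension.t ^ (e' : ℤ)), ht, one_mul]
      have h3 := ih (l0 ++ (e0, z * y) :: l2).length (by subst hl; simp) _ g rfl h2
      have h4 := EE_of_cancel hV ((kap hU hR g : σ.Quotient) *
          ((l0.map fun x => Tq σ x.1 * (kap hU hR x.2 : σ.Quotient)).prod *
            (Tq σ e0 * (kap hU hR z : σ.Quotient)))) (Tq σ e * Tq σ e')
        ((kap hU hR y : σ.Quotient) *
          (l2.map fun x => Tq σ x.1 * (kap hU hR x.2 : σ.Quotient)).prod) s hs (by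
          simpa only [val, List.map_append, List.prod_append, List.map_cons, List.prod_cons,
            map_mul, Units.val_mul, mul_assoc] using h3)
      simpa only [val, List.concat_eq_append, List.map_append, List.prod_append, List.map_cons,
        List.prod_cons, List.map_nil, List.prod_nil, map_one, Units.val_one,
        mul_one, mul_assoc] using h4

end group

/-- All group letters and inverses. -/
def lettersList (k : ℕ) : List (FreeMonoid (Fin (k + 1) × Bool)) :=
  (List.finRange k).flatMap fun i => [inc k (FreeMonoid.of (i, true)), inc k (FreeMonoid.of (i, false))]

/-- The word `t v t⁻¹`. -/
def tconj {k : ℕ} (v : FreeMonoid (Fin k × Bool)) : FreeMonoid (Fin (k + 1) × Bool) :=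
  tl k true * inc k v * tl k false

/-- The relator. -/
def relator {k : ℕ} (r : FreeMonoid (Fin k × Bool)) (ws : List (FreeMonoid (Fin k × Bool))) :
    FreeMonoid (Fin (k + 1) × Bool) :=
  idemProd (lettersList k ++ ws.map tconj) * inc k r

section rel
variable {k : ℕ} (r : FreeMonoid (Fin k × Bool)) (ws : List (FreeMonoid (Fin k × Bool)))

lemma rel_V : ∀ x y, vagnerRel (Fin (k + 1)) x y → oneRelatorInvCon (relator r ws) x y :=
  fun _ _ h => ConGen.Rel.of _ _ (Or.inl h)

lemma rel_cons : (oneRelatorInvCon (relator r ws)).mk' (inc k r) = 1 ∧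
    ∀ s ∈ lettersList k ++ ws.map tconj,
      (oneRelatorInvCon (relator r ws)).mk' (s * wInv s) = 1 :=
  rel_consequences (rel_V r ws) (lettersList k ++ ws.map tconj) (inc k r)
  (ConGen.Rel.of _ _ (Or.inr ⟨rfl, rfl⟩))

lemma rel_U (i : Fin k) (b : Bool) :
    (oneRelatorInvCon (relator r ws)).mk' (inc k (FreeMonoid.of (i, b))) *
      (oneRelatorInvCon (relator r ws)).mk' (inc k (FreeMonoid.of (i, !b))) = 1 := by
  have := (rel_cons r ws).2 (inc k (FreeMonoid.of (i, b))) (by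
    apply List.mem_append_left
    rw [lettersList, List.mem_flatMap]
    exact ⟨i, List.mem_finRange i, by cases b <;> simp⟩)
  rwa [← inc_wInv, map_mul] at this

lemma rel_R : (oneRelatorInvCon (relator r ws)).mk' (inc k r) = 1 := (rel_cons r ws).1

theorem eUnitary (u : FreeMonoid (Fin (k + 1) × Bool))
    (hu : FreeGroup.mk (FreeMonoid.toList u) ∈
      Subgroup.normalClosure {FreeGroup.mk (FreeMonoid.toList (relator r ws))}) :
    oneRelatorInvCon (relator r ws) (u * u) u := by
  have h1 : alp r (fgHom _ u) = 1 := by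
    have : Subgroup.normalClosure {FreeGroup.mk (FreeMonoid.toList (relator r ws))}
        ≤ (alp r).ker := by
      apply Subgroup.normalClosure_le_normal
      rw [Set.singleton_subset_iff]
      change alp r (fgHom _ (relator r ws)) = 1
      rw [relator, map_mul, fgHom_idemProd, one_mul, alp_inc, gg_r, map_one]
    exact this hu
  obtain ⟨g, l, h2, h3⟩ := exists_form (rel_U r ws) (rel_R r ws) u
  have h4 := val_EE (rel_U r ws) (rel_R r ws) (rel_V r ws) l.length l g rfl (h3 ▸ h1)
  rw [← h2] at h4
  have := EE_idem (rel_V r ws) h4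
  rw [← map_mul] at this
  exact (Con.eq _).1 this

end rel

end OneRel


namespace OneRel
open Function Relation

/-! ## Part D: the concrete relator and the upper bound -/

section concrete

/-- Number of group letters. -/
abbrev KK (J : List Atom) : ℕ := J.length + 2 + 2

variable (J : List Atom)

/-- Words in the group letters. -/
abbrev GW : Type := FreeMonoid (Fin (KK J) × Bool)

/-- The letter `a`. -/
def wA : GW J := FreeMonoid.of (0, true)
/-- The letter `z`. -/
def wZ : GW J := FreeMonoid.of (1, true)
/-- The state letters. -/
def wX (p : Fin (J.length + 2)) : GW J := FreeMonoid.of (p.succ.succ, true)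
/-- The conjugate `z u z⁻¹`. -/
def wC (u : GW J) : GW J := wZ J * u * wInv (wZ J)
/-- The word for `b ^ n`. -/
def wb (n : ℕ) : GW J := wC J (wA J ^ n)
/-- The word for `c ^ n`. -/
def wc (n : ℕ) : GW J := wC J (wC J (wA J ^ n))
/-- The word for `d`. -/
def wd : GW J := wC J (wC J (wC J (wA J)))
/-- The group relator. -/
def wr : GW J := wA J * wb J 1 * wInv (wA J) * wInv (wb J 1)
/-- A transition word. -/
def wT (p : Fin (J.length + 2)) (u : GW J) (q : Fin (J.length + 2)) : GW J :=
  wX J p * u * wInv (wX J q)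

/-- The transition words of an atom. -/
def wsAtom (j : Fin J.length) : List (GW J) :=
  [wT J 1 (wInv (wb J (J.get j).2.1 * wc J (J.get j).2.2.2 * wd J)) j.succ.succ,
   wT J j.succ.succ (wInv (wb J (J.get j).1 * wc J (J.get j).2.2.1)) j.succ.succ,
   wT J j.succ.succ (wInv (wA J)) 1]

/-- All transition words. -/
def wws (τ : ℕ) : List (GW J) :=
  wT J 0 (wb J 1 * wc J 1) 0 :: wT J 0 (wA J * wd J) 0 ::
    wT J 0 (wInv (wA J * wb J τ * wd J)) 1 :: (List.finRange J.length).flatMap (wsAtom J)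

/-- The query word. -/
def query (n : ℕ) : FreeMonoid (Fin (KK J + 1) × Bool) := tconj (wT J 0 (wc J n) 1)

end concrete

lemma group_run {G : Type*} [Group G] (J : List Atom) (τ : ℕ) (a b c d : G)
    (x : Fin (J.length + 2) → G)
    (hab : Commute a b) (hbc : Commute b c) (hcd : Commute c d) (S : Set G)
    (hS : ∀ g ∈ S, ∀ h ∈ S, g * h ∈ S)
    (h1 : x 0 * (b * c) * (x 0)⁻¹ ∈ S)
    (h2 : x 0 * (a * d) * (x 0)⁻¹ ∈ S)
    (h3 : x 0 * (a * b ^ τ * d)⁻¹ * (x 1)⁻¹ ∈ S)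
    (h4 : ∀ j : Fin J.length, x 1 * (b ^ (J.get j).2.1 * c ^ (J.get j).2.2.2 * d)⁻¹ *
      (x j.succ.succ)⁻¹ ∈ S)
    (h5 : ∀ j : Fin J.length, x j.succ.succ * (b ^ (J.get j).1 * c ^ (J.get j).2.2.1)⁻¹ *
      (x j.succ.succ)⁻¹ ∈ S)
    (h6 : ∀ j : Fin J.length, x j.succ.succ * a⁻¹ * (x 1)⁻¹ ∈ S)
    (n : ℕ) (hn : ReflTransGen (CStep J) n τ) : x 0 * c ^ n * (x 1)⁻¹ ∈ S := by
  have comp : ∀ {p q r : Fin (J.length + 2)} {g h : G}, x p * g * (x q)⁻¹ ∈ S →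
      x q * h * (x r)⁻¹ ∈ S → x p * (g * h) * (x r)⁻¹ ∈ S := by
    intro p q r g h hg hh
    have := hS _ hg _ hh
    have e : x p * g * (x q)⁻¹ * (x q * h * (x r)⁻¹) = x p * (g * h) * (x r)⁻¹ := by group
    rwa [e] at this
  have powl : ∀ {p q : Fin (J.length + 2)} {g h : G} (k : ℕ), x p * g * (x p)⁻¹ ∈ S →
      x p * h * (x q)⁻¹ ∈ S → x p * (g ^ k * h) * (x q)⁻¹ ∈ S := by
    intro p q g h k hg hh
    induction k with
    | zero => simpa using hh
    | succ k ih => 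
      rw [pow_succ', mul_assoc g]
      exact comp hg ih
  have key : ∀ n m : ℕ, (b * c) ^ n * ((a * d) * (c ^ m * (a * b ^ n * c ^ m * d)⁻¹)) = c ^ n := by
    intro n m
    rw [← mul_assoc, ← mul_assoc, mul_inv_eq_iff_eq_mul]
    have e1 : b ^ n * a = a * b ^ n := ((hab.pow_right n).eq).symm
    have e2 : d * c ^ m = c ^ m * d := ((hcd.pow_left m).eq).symm
    have e3 : b ^ n * c ^ n = c ^ n * b ^ n := ((hbc.pow_pow n n).eq)
    calc (b * c) ^ n * (a * d) * c ^ m = b ^ n * c ^ n * a * (d * c ^ m) := by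
          rw [hbc.mul_pow]; simp only [mul_assoc]
      _ = c ^ n * (b ^ n * a) * (c ^ m * d) := by rw [e2, e3]; simp only [mul_assoc]
      _ = _ := by rw [e1]; simp only [mul_assoc]
  induction hn using ReflTransGen.head_induction_on with
  | refl =>
    have := key τ 0
    rw [pow_zero, one_mul, mul_one] at this
    rw [← this]
    exact powl τ h1 (comp h2 h3)
  | @head n m hnm _ ih =>
    rw [← key n m]
    refine powl n h1 (comp h2 (comp ih ?_))
    obtain ⟨α, hα, k, e1, e2⟩ := hnm
    obtain ⟨j, hj, rfl⟩ := List.mem_iff_getElem.1 hα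
    set jj : Fin J.length := ⟨j, hj⟩
    have e : (a * b ^ n * c ^ m * d)⁻¹ = (b ^ (J.get jj).2.1 * c ^ (J.get jj).2.2.2 * d)⁻¹ *
        (((b ^ (J.get jj).1 * c ^ (J.get jj).2.2.1)⁻¹) ^ k * a⁻¹) := by
      rw [inv_pow, ← mul_inv_rev, ← mul_inv_rev, inv_inj,
        (hbc.pow_pow _ _).mul_pow, ← pow_mul, ← pow_mul, e1, e2]
      simp only [List.get_eq_getElem, jj]
      rw [pow_add, pow_add]
      have e3 := ((hbc.pow_pow (J[j].2.1) (J[j].2.2.1 * k)).eq)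
      simp only [mul_assoc]
      rw [← mul_assoc (b ^ J[j].2.1), e3]
      simp only [mul_assoc]
    rw [e]
    exact comp (h4 jj) (powl k (h5 jj) (h6 jj))

section upper
variable (J : List Atom) (τ : ℕ)

/-- The congruence. -/
abbrev SG : Con (FreeMonoid (Fin (KK J + 1) × Bool)) :=
  oneRelatorInvCon (relator (wr J) (wws J τ))

/-- The right units of the form `t g t⁻¹`. -/
def TG : Set (GG (wr J)) :=
  {g | ∃ y, (SG J τ).mk' (tl _ true) * (kap (rel_U (wr J) (wws J τ)) (rel_R (wr J) (wws J τ)) g :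
    (SG J τ).Quotient) * (SG J τ).mk' (tl _ false) * y = 1}

lemma TG_mul : ∀ g ∈ TG J τ, ∀ h ∈ TG J τ, g * h ∈ TG J τ := by
  rintro g ⟨y1, h1⟩ h ⟨y2, h2⟩
  have := rightInv_of_cancel (rel_V (wr J) (wws J τ))
    ((SG J τ).mk' (tl _ true) * (kap (rel_U (wr J) (wws J τ)) (rel_R (wr J) (wws J τ)) g :
    (SG J τ).Quotient)) ((SG J τ).mk' (tl _ false) * (SG J τ).mk' (tl _ true))
    ((kap (rel_U (wr J) (wws J τ)) (rel_R (wr J) (wws J τ)) h :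
    (SG J τ).Quotient) * (SG J τ).mk' (tl _ false)) (tl _ false) (by rw [← map_mul]; rfl)
    ⟨y2 * y1, by
      simp only [mul_assoc] at h1 h2 ⊢
      rw [← h1]
      congr 3
      conv_rhs => rw [← one_mul y1, ← h2]
      simp only [mul_assoc]⟩
  obtain ⟨y, hy⟩ := this
  refine ⟨y, ?_⟩
  rw [← hy, map_mul, Units.val_mul]
  simp only [mul_assoc]

lemma mem_TG_iff (v : GW J) : gg (wr J) v ∈ TG J τ ↔ 
    (SG J τ).mk' (tconj v * wInv (tconj v)) = 1 := by
  constructor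
  · rintro ⟨y, hy⟩
    apply mul_wInv_of_rightInv (rel_V (wr J) (wws J τ)) _ y
    rwa [kap_gg, ← map_mul, ← map_mul] at hy
  · intro h
    refine ⟨(SG J τ).mk' (wInv (tconj v)), ?_⟩
    rw [kap_gg, ← map_mul, ← map_mul, ← map_mul]
    exact h

theorem upper (n : ℕ) (hn : ReflTransGen (CStep J) n τ) :
    SG J τ (query J n * wInv (query J n)) 1 := by
  have hws : ∀ v ∈ wws J τ, gg (wr J) v ∈ TG J τ := by
    intro v hv
    rw [mem_TG_iff]
    exact (rel_cons (wr J) (wws J τ)).2 _ (List.mem_append_right _ (List.mem_map_of_mem hv))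
  have hgoal : gg (wr J) (wT J 0 (wc J n) 1) ∈ TG J τ := by
    set a := gg (wr J) (wA J) with ha
    set z := gg (wr J) (wZ J) with hz
    have hC : ∀ u, gg (wr J) (wC J u) = z * gg (wr J) u * z⁻¹ := by
      intro u; rw [wC, map_mul, map_mul, gg_wInv]
    have hb : ∀ m, gg (wr J) (wb J m) = (z * a * z⁻¹) ^ m := by
      intro m; rw [wb, hC, map_pow, conj_pow]
    have hc : ∀ m, gg (wr J) (wc J m) = (z * (z * a * z⁻¹) * z⁻¹) ^ m := by
      intro m; rw [wc, hC, hC, map_pow, conj_pow, conj_pow]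
    have hd : gg (wr J) (wd J) = z * (z * (z * a * z⁻¹) * z⁻¹) * z⁻¹ := by
      rw [wd, hC, hC, hC]
    have hT : ∀ p u q, gg (wr J) (wT J p u q) =
        gg (wr J) (wX J p) * gg (wr J) u * (gg (wr J) (wX J q))⁻¹ := by
      intro p u q; rw [wT, map_mul, map_mul, gg_wInv]
    have hab : Commute a (z * a * z⁻¹) := by
      have : gg (wr J) (wA J * wb J 1 * wInv (wA J) * wInv (wb J 1)) = 1 := gg_r (r := wr J)
      rw [map_mul, map_mul, map_mul, gg_wInv, gg_wInv, hb, pow_one, ← ha] at this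
      rw [mul_inv_eq_one, mul_inv_eq_iff_eq_mul] at this
      exact this
    have cj : ∀ {u v : GG (wr J)}, Commute u v → Commute (z * u * z⁻¹) (z * v * z⁻¹) := by
      intro u v h
      have := h.eq
      change z * u * z⁻¹ * (z * v * z⁻¹) = z * v * z⁻¹ * (z * u * z⁻¹)
      calc z * u * z⁻¹ * (z * v * z⁻¹) = z * (u * v) * z⁻¹ := by group
        _ = z * (v * u) * z⁻¹ := by rw [this]
        _ = _ := by group
    have hat : ∀ j, ∀ v ∈ wsAtom J j, gg (wr J) v ∈ TG J τ := by
      intro j v hv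
      apply hws
      simp only [wws, List.mem_cons, List.mem_flatMap]
      exact Or.inr (Or.inr (Or.inr ⟨j, List.mem_finRange j, hv⟩))
    rw [hT, hc]
    refine group_run J τ a (z * a * z⁻¹) _ _ (fun p => gg (wr J) (wX J p)) hab (cj hab)
      (cj (cj hab)) (TG J τ) (TG_mul J τ) ?_ ?_ ?_ ?_ ?_ ?_ n hn
    · have := hws (wT J 0 (wb J 1 * wc J 1) 0) (by simp [wws])
      rwa [hT, map_mul, hb, hc, pow_one, pow_one] at this
    · have := hws (wT J 0 (wA J * wd J) 0) (by simp [wws])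
      rwa [hT, map_mul, hd] at this
    · have := hws (wT J 0 (wInv (wA J * wb J τ * wd J)) 1) (by simp [wws])
      rwa [hT, gg_wInv, map_mul, map_mul, hb, hd] at this
    · intro j
      have := hat j (wT J 1 (wInv (wb J (J.get j).2.1 * wc J (J.get j).2.2.2 * wd J)) j.succ.succ)
        (by simp [wsAtom])
      rwa [hT, gg_wInv, map_mul, map_mul, hb, hc, hd] at this
    · intro j
      have := hat j (wT J j.succ.succ (wInv (wb J (J.get j).1 * wc J (J.get j).2.2.1)) j.succ.succ)
        (by simp [wsAtom])
      rwa [hT, gg_wInv, map_mul, hb, hc] at this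
    · intro j
      have := hat j (wT J j.succ.succ (wInv (wA J)) 1)
        (by simp [wsAtom])
      rwa [hT, gg_wInv] at this
  rw [mem_TG_iff] at hgoal
  exact (Con.eq _).1 hgoal

end upper

end OneRel


namespace OneRel
open Function Relation

/-! ## Part E: partial bijections and the lower bound -/

/-- Partial bijections of a type, composed from left to right. -/
abbrev PM (Y : Type) : Type := Y ≃. Y

instance (Y : Type) : Monoid (PM Y) where
  mul f g := PEquiv.trans f g
  one := PEquiv.refl Y
  mul_assoc f g h := PEquiv.trans_assoc f g h
  one_mul f := PEquiv.refl_trans f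
  mul_one f := PEquiv.trans_refl f

lemma pm_reg {Y : Type} (f : Y ≃. Y) : (f.trans f.symm).trans f = f := by
  ext a b
  rw [← Option.mem_def, ← Option.mem_def]
  simp only [PEquiv.mem_trans]
  constructor
  · rintro ⟨c, ⟨d, h1, h2⟩, h3⟩
    have : a = c := PEquiv.inj f h1 (f.mem_iff_mem.1 h2)
    exact this ▸ h3
  · intro h
    exact ⟨a, ⟨b, h, f.mem_iff_mem.2 h⟩, h⟩

lemma pm_comm {Y : Type} (f g : Y ≃. Y) : (f.trans f.symm).trans (g.trans g.symm) =
    (g.trans g.symm).trans (f.trans f.symm) := by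
  rw [PEquiv.self_trans_symm, PEquiv.self_trans_symm]
  ext a b
  rw [← Option.mem_def, ← Option.mem_def]
  simp only [PEquiv.mem_trans, PEquiv.mem_ofSet_iff]
  constructor
  · rintro ⟨c, ⟨rfl, h1⟩, rfl, h2⟩
    exact ⟨_, ⟨rfl, h2⟩, rfl, h1⟩
  · rintro ⟨c, ⟨rfl, h1⟩, rfl, h2⟩
    exact ⟨_, ⟨rfl, h2⟩, rfl, h1⟩

lemma pm_total {Y : Type} (f : Y ≃. Y) :
    f.trans f.symm = PEquiv.refl Y ↔ ∀ y, (f y).isSome := by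
  constructor
  · intro h y
    have : y ∈ (f.trans f.symm) y := by rw [h]; rfl
    obtain ⟨b, hb, _⟩ := (PEquiv.mem_trans _ _ _ _).1 this
    exact Option.isSome_of_mem hb
  · intro h
    rw [PEquiv.self_trans_symm]
    ext a b
    rw [← Option.mem_def, ← Option.mem_def, PEquiv.mem_ofSet_iff, PEquiv.refl_apply, Option.mem_some_iff]
    exact ⟨fun h => h.1.symm, fun e => ⟨e.symm, h _⟩⟩

section ev
variable {k : ℕ} {Y : Type} (P : Fin k → Equiv.Perm Y) (f : Y → Y) (hf : Injective f)

/-- The action of a group word on points, from left to right. -/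
def act (u : FreeMonoid (Fin k × Bool)) (y : Y) : Y :=
  (FreeMonoid.toList u).foldl (fun y x => if x.2 then P x.1 y else (P x.1).symm y) y

lemma act_one (y : Y) : act P 1 y = y := rfl

lemma act_mul (u v) (y : Y) : act P (u * v) y = act P v (act P u y) := by
  simp only [act, FreeMonoid.toList_mul, List.foldl_append]

lemma act_of (i : Fin k) (y : Y) : act P (FreeMonoid.of (i, true)) y = P i y := rfl

lemma act_of' (i : Fin k) (y : Y) : act P (FreeMonoid.of (i, false)) y = (P i).symm y := rfl

lemma act_wInv_act (u) (y : Y) : act P (wInv u) (act P u y) = y := by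
  induction u using FreeMonoid.inductionOn' generalizing y with
  | one => rfl
  | of_mul x u ih =>
    rw [wInv_mul, act_mul, act_mul, ih, wInv_of]
    obtain ⟨i, b⟩ := x
    cases b
    · change P i ((P i).symm y) = y
      simp
    · change (P i).symm (P i y) = y
      simp

lemma act_act_wInv (u) (y : Y) : act P u (act P (wInv u) y) = y := by
  have := act_wInv_act P (wInv u) y
  rwa [wInv_wInv] at this

/-- An injection as a partial bijection. -/
noncomputable def tP : Y ≃. Y where
  toFun y := some (f y)
  invFun := partialInv f
  inv a b := by rw [hf.isPartialInv a b]; simp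

/-- Generators as partial bijections. -/
noncomputable def genP : Fin (k + 1) → Y ≃. Y :=
  Fin.cases (tP f hf) fun i => (P i).toPEquiv

/-- The evaluation of words in partial bijections. -/
noncomputable def ev : FreeMonoid (Fin (k + 1) × Bool) →* PM Y :=
  FreeMonoid.lift fun x => if x.2 then genP P f hf x.1 else (genP P f hf x.1).symm

lemma ev_mul' (u v) : ev P f hf (u * v) =
    PEquiv.trans (ev P f hf u : Y ≃. Y) (ev P f hf v : Y ≃. Y) := map_mul _ u v

lemma ev_wInv (u) : ev P f hf (wInv u) = PEquiv.symm (ev P f hf u : Y ≃. Y) := by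
  induction u using FreeMonoid.inductionOn' with
  | one => rfl
  | of_mul x u ih =>
    rw [wInv_mul, ev_mul', ev_mul', ih, PEquiv.symm_trans_rev]
    congr 1
    obtain ⟨i, b⟩ := x
    cases b <;> rfl

lemma ev_inc (u : FreeMonoid (Fin k × Bool)) (y : Y) :
    (ev P f hf (inc k u) : Y ≃. Y) y = some (act P u y) := by
  induction u using FreeMonoid.inductionOn' generalizing y with
  | one => rfl
  | of_mul x u ih =>
    rw [map_mul, ev_mul', act_mul, ← ih]
    obtain ⟨i, b⟩ := x
    cases b <;> rfl

lemma ev_tconj (v : FreeMonoid (Fin k × Bool)) (y : Y) :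
    (ev P f hf (tconj v) : Y ≃. Y) y = partialInv f (act P v (f y)) := by
  rw [tconj, ev_mul', ev_mul']
  have : ((ev P f hf (tl k true) : Y ≃. Y).trans (ev P f hf (inc k v) : Y ≃. Y)) y =
    (ev P f hf (inc k v) : Y ≃. Y) (f y) := rfl
  change (((ev P f hf (tl k true) : Y ≃. Y).trans (ev P f hf (inc k v) : Y ≃. Y)) y).bind _ = _
  rw [this, ev_inc]
  rfl

lemma ev_total (s) : ev P f hf (s * wInv s) = 1 ↔ ∀ y, ((ev P f hf s : Y ≃. Y) y).isSome := by
  rw [ev_mul', ev_wInv]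
  exact pm_total _

lemma ev_total_tconj (v : FreeMonoid (Fin k × Bool)) :
    ev P f hf (tconj v * wInv (tconj v)) = 1 ↔ ∀ y ∈ Set.range f, act P v y ∈ Set.range f := by
  rw [ev_total]
  simp only [ev_tconj, Set.forall_mem_range]
  refine forall_congr' fun y => ?_
  rw [Option.isSome_iff_exists]
  exact exists_congr fun z => hf.isPartialInv _ _

theorem ev_respects (r : FreeMonoid (Fin k × Bool)) (ws : List (FreeMonoid (Fin k × Bool)))
    (hr : ∀ y, act P r y = y)
    (hws : ∀ v ∈ ws, ∀ y ∈ Set.range f, act P v y ∈ Set.range f)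
    {x x' : FreeMonoid (Fin (k + 1) × Bool)} (h : oneRelatorInvCon (relator r ws) x x') :
    ev P f hf x = ev P f hf x' := by
  have hle : oneRelatorInvCon (relator r ws) ≤ Con.ker (ev P f hf) := by
    apply Con.conGen_le.2
    intro x y hxy
    rw [Con.ker_rel]
    rcases hxy with (⟨w, rfl, rfl⟩ | ⟨u, w, rfl, rfl⟩) | ⟨rfl, rfl⟩
    · rw [ev_mul', ev_mul', ev_wInv]
      exact pm_reg _
    · simp only [ev_mul', ev_wInv]
      exact pm_comm _ _
    · have h1 : ∀ s ∈ lettersList k ++ ws.map tconj, ev P f hf (s * wInv s) = 1 := by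
        intro s hs
        rcases List.mem_append.1 hs with hs | hs
        · rw [lettersList, List.mem_flatMap] at hs
          obtain ⟨i, _, hs⟩ := hs
          rw [ev_total]
          intro y
          simp only [List.mem_cons, List.not_mem_nil, or_false] at hs
          rcases hs with rfl | rfl <;> rw [ev_inc] <;> rfl
        · obtain ⟨v, hv, rfl⟩ := List.mem_map.1 hs
          rw [ev_total_tconj]
          exact hws v hv
      have h2 : ∀ S : List (FreeMonoid (Fin (k + 1) × Bool)), 
          (∀ s ∈ S, ev P f hf (s * wInv s) = 1) → ev P f hf (idemProd S) = 1 := by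
        intro S
        induction S with
        | nil => intro _; exact map_one _
        | cons s S ih =>
          intro h
          rw [idemProd, List.map_cons, List.prod_cons, map_mul, h s (by simp), one_mul]
          exact ih fun s hs => h s (by simp [hs])
      rw [relator, map_mul, h2 _ h1, one_mul, map_one]
      apply PEquiv.ext
      intro y
      rw [ev_inc, hr]
      rfl
  exact (Con.ker_rel _).1 (hle h)

end ev

/-! ### The point set -/

/-- The free group of rank two. -/
abbrev F2 : Type := FreeGroup Bool
/-- First generator. -/
def gp : F2 := FreeGroup.of true
/-- Second generator. -/
def gq : F2 := FreeGroup.of false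
/-- The swap automorphism. -/
def thH : F2 →* F2 := FreeGroup.map not

lemma thH_thH (x : F2) : thH (thH x) = x := by
  rw [thH, FreeGroup.map.comp]
  have : (not ∘ not) = id := by funext b; cases b <;> rfl
  rw [this]
  exact FreeGroup.map.id x

lemma thH_p : thH gp = gq := rfl
lemma thH_q : thH gq = gp := rfl

/-- The point set. -/
abbrev Pt : Type := (F2 × F2) × Option Bool × ℕ

/-- The action of `a`. -/
def actA : Equiv.Perm Pt where
  toFun y := ((y.1.1 * gp, y.1.2), y.2)
  invFun y := ((y.1.1 * gp⁻¹, y.1.2), y.2)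
  left_inv y := by simp
  right_inv y := by simp

/-- The action of `z`. -/
def actZ : Equiv.Perm Pt where
  toFun y := ((y.1.2, thH y.1.1), y.2)
  invFun y := ((thH y.1.2, y.1.1), y.2)
  left_inv y := by simp [thH_thH]
  right_inv y := by simp [thH_thH]

section sets
variable (J : List Atom) (τ : ℕ)

/-- The set for the initial state. -/
def L0 (f g : F2) : Prop := g = thH f

/-- The set for the main state. -/
inductive L1 : F2 → F2 → Prop
  | base (f g : F2) (h : L0 (f * gp) (g * gp ^ τ * gq)) : L1 f g
  | step (f g : F2) (n m : ℕ) (hnm : CStep J n m)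
      (h : L1 (f * gp * gq ^ m) (g * gp ^ n * gq)) : L1 f g

/-- The set for the state of an atom. -/
def L2 (α : Atom) (f g : F2) : Prop :=
  ∃ k, L1 J τ (f * gq ^ (α.2.2.2 + α.2.2.1 * k)) (g * gp ^ (α.2.1 + α.1 * k) * gq)

/-- The set for a state. -/
def LL : Fin (J.length + 2) → F2 → F2 → Prop :=
  Fin.cases L0 (Fin.cases (L1 J τ) fun j => L2 J τ (J.get j))

/-- The set of points for a state. -/
def II (p : Fin (J.length + 2)) : Set Pt :=
  {y | y.2.1 = some true ∨ (y.2.1 = none ∧ LL J τ p y.1.1 y.1.2)}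

/-- The base set of points. -/
def I0 : Set Pt := {y | y.2.1 = some true}

lemma exists_perm {Y : Type} [Countable Y] (S T : Set Y) (h1 : S.Infinite) (h2 : Sᶜ.Infinite)
    (h3 : T.Infinite) (h4 : Tᶜ.Infinite) : ∃ e : Equiv.Perm Y, ∀ y, e y ∈ T ↔ y ∈ S := by
  classical
  have := h1.to_subtype
  have := h2.to_subtype
  have := h3.to_subtype
  have := h4.to_subtype
  obtain ⟨e1⟩ := nonempty_equiv_of_countable (α := S) (β := T)
  obtain ⟨e2⟩ := nonempty_equiv_of_countable (α := (Sᶜ : Set Y)) (β := (Tᶜ : Set Y))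
  let e : Equiv.Perm Y := (Equiv.Set.sumCompl S).symm.trans
    ((Equiv.sumCongr e1 e2).trans (Equiv.Set.sumCompl T))
  refine ⟨e, fun y => ?_⟩
  by_cases hy : y ∈ S
  · have : e y = e1 ⟨y, hy⟩ := by
      simp [e, Equiv.Set.sumCompl_symm_apply_of_mem hy]
    rw [this]; simp [hy]
  · have : e y = e2 ⟨y, hy⟩ := by
      simp [e, Equiv.Set.sumCompl_symm_apply_of_notMem hy]
    rw [this]
    have := (e2 ⟨y, hy⟩).2
    simp only [hy, iff_false]
    exact this

lemma slice_inf (S : Set Pt) (o : Option Bool) (h : ∀ y : Pt, y.2.1 = o → y ∈ S) : S.Infinite := by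
  apply Set.infinite_of_injective_forall_mem (f := fun n : ℕ => (((1, 1), o, n) : Pt))
  · intro a b hab
    simpa using hab
  · intro n
    exact h _ rfl

lemma I0_inf : I0.Infinite := slice_inf _ (some true) fun _ h => h

lemma I0c_inf : I0ᶜ.Infinite := slice_inf _ (some false) fun y h => by
  simp [I0, h]

lemma II_inf (p) : (II J τ p).Infinite := slice_inf _ (some true) fun _ h => Or.inl h

lemma IIc_inf (p) : (II J τ p)ᶜ.Infinite := slice_inf _ (some false) fun y h => by
  simp [II, h]

/-- The action of the state letters. -/
noncomputable def actX (p : Fin (J.length + 2)) : Equiv.Perm Pt :=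
  (exists_perm I0 (II J τ p) I0_inf I0c_inf (II_inf J τ p) (IIc_inf J τ p)).choose

lemma actX_mem (p) (y : Pt) : actX J τ p y ∈ II J τ p ↔ y ∈ I0 :=
  (exists_perm I0 (II J τ p) I0_inf I0c_inf (II_inf J τ p) (IIc_inf J τ p)).choose_spec y

lemma exists_tf : ∃ f : Pt → Pt, Injective f ∧ Set.range f = I0 := by
  have := I0_inf.to_subtype
  obtain ⟨e⟩ := nonempty_equiv_of_countable (α := Pt) (β := I0)
  refine ⟨fun y => e y, Subtype.val_injective.comp e.injective, ?_⟩
  have : (fun y => (e y : Pt)) = Subtype.val ∘ e := rfl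
  rw [this, Set.range_comp, e.surjective.range_eq, Set.image_univ, Subtype.range_coe]

/-- The action of the group letters. -/
noncomputable def PP : Fin (KK J) → Equiv.Perm Pt :=
  Fin.cases actA (Fin.cases actZ (actX J τ))

lemma act_A (f g : F2) (o) : act (PP J τ) (wA J) ((f, g), o) = ((f * gp, g), o) := rfl

lemma act_Apow (n : ℕ) (f g : F2) (o) :
    act (PP J τ) (wA J ^ n) ((f, g), o) = ((f * gp ^ n, g), o) := by
  induction n generalizing f with
  | zero => simp [act_one]
  | succ n ih => rw [pow_succ', act_mul, act_A, ih, pow_succ', mul_assoc]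

lemma act_C (u) (y : Pt) : act (PP J τ) (wC J u) y = actZ.symm (act (PP J τ) u (actZ y)) := by
  rw [wC, act_mul, act_mul]; rfl

lemma act_b (n : ℕ) (f g : F2) (o) :
    act (PP J τ) (wb J n) ((f, g), o) = ((f, g * gp ^ n), o) := by
  rw [wb, act_C]
  change actZ.symm (act (PP J τ) (wA J ^ n) ((g, thH f), o)) = _
  rw [act_Apow]
  change ((thH (thH f), g * gp ^ n), o) = _
  rw [thH_thH]

lemma act_c (n : ℕ) (f g : F2) (o) :
    act (PP J τ) (wc J n) ((f, g), o) = ((f * gq ^ n, g), o) := by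
  rw [wc, act_C]
  change actZ.symm (act (PP J τ) (wb J n) ((g, thH f), o)) = _
  rw [act_b]
  change ((thH (thH f * gp ^ n), g), o) = _
  rw [map_mul, thH_thH, map_pow, thH_p]

lemma act_d (f g : F2) (o) :
    act (PP J τ) (wd J) ((f, g), o) = ((f, g * gq), o) := by
  have : wd J = wC J (wc J 1) := by rw [wd, wc, pow_one]
  rw [this, act_C]
  change actZ.symm (act (PP J τ) (wc J 1) ((g, thH f), o)) = _
  rw [act_c]
  change ((thH (thH f), g * gq ^ 1), o) = _
  rw [thH_thH, pow_one]

lemma act_r (y : Pt) : act (PP J τ) (wr J) y = y := by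
  have : act (PP J τ) (wA J * wb J 1) y = act (PP J τ) (wb J 1 * wA J) y := by
    obtain ⟨⟨f, g⟩, o⟩ := y
    rw [act_mul, act_mul, act_A, act_b, act_b, act_A]
  rw [wr, mul_assoc, ← wInv_mul, act_mul, this, act_wInv_act]

/-- A group word which only uses `a` and `z`, and moves the sets correctly. -/
lemma act_T (p u q)
    (hu : ∀ f g o, ∃ f' g', act (PP J τ) u ((f, g), o) = ((f', g'), o) ∧
      (LL J τ p f g → LL J τ q f' g')) (y : Pt) (hy : y ∈ I0) :
    act (PP J τ) (wT J p u q) y ∈ I0 := by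
  rw [wT, act_mul, act_mul]
  have h1 : act (PP J τ) (wX J p) y ∈ II J τ p := (actX_mem J τ p y).2 hy
  set y1 := act (PP J τ) (wX J p) y
  obtain ⟨⟨f, g⟩, o, i⟩ := y1
  obtain ⟨f', g', e, hL⟩ := hu f g (o, i)
  rw [e]
  have h2 : (((f', g'), o, i) : Pt) ∈ II J τ q := by
    rcases h1 with h1 | ⟨h1, h2⟩
    · exact Or.inl h1
    · exact Or.inr ⟨h1, hL h2⟩
  rw [← actX_mem J τ q]
  have h3 : actX J τ q (act (PP J τ) (wInv (wX J q)) ((f', g'), o, i)) = ((f', g'), o, i) :=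
    act_act_wInv (PP J τ) (wX J q) _
  rw [h3]
  exact h2

lemma act_T_inv (p u q) (F G : F2)
    (hu : ∀ f g o, act (PP J τ) u ((f, g), o) = ((f * F, g * G), o))
    (hL : ∀ f g, LL J τ p (f * F) (g * G) → LL J τ q f g) (y : Pt) (hy : y ∈ I0) :
    act (PP J τ) (wT J p (wInv u) q) y ∈ I0 := by
  refine act_T J τ p _ q (fun f g o => ⟨f * F⁻¹, g * G⁻¹, ?_, fun h => hL _ _ ?_⟩) y hy
  · have := hu (f * F⁻¹) (g * G⁻¹) o
    simp only [inv_mul_cancel_right] at this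
    rw [← this, act_wInv_act]
  · simpa using h

lemma act_ws : ∀ v ∈ wws J τ, ∀ y ∈ I0, act (PP J τ) v y ∈ I0 := by
  intro v hv
  simp only [wws, List.mem_cons, List.mem_flatMap] at hv
  rcases hv with rfl | rfl | rfl | ⟨j, _, hv⟩
  · apply act_T
    intro f g o
    refine ⟨f * gq, g * gp, by rw [act_mul, act_b, act_c, pow_one, pow_one], fun h => ?_⟩
    change g = thH f at h
    change g * gp = thH (f * gq)
    rw [map_mul, h, thH_q]
  · apply act_T
    intro f g o
    refine ⟨f * gp, g * gq, by rw [act_mul, act_A, act_d], fun h => ?_⟩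
    change g = thH f at h
    change g * gq = thH (f * gp)
    rw [map_mul, h, thH_p]
  · apply act_T_inv J τ _ _ _ gp (gp ^ τ * gq)
    · intro f g o
      rw [act_mul, act_mul, act_A, act_b, act_d, mul_assoc]
    · intro f g h
      exact L1.base f g (by rw [mul_assoc]; exact h)
  · simp only [wsAtom, List.mem_cons, List.not_mem_nil, or_false] at hv
    rcases hv with rfl | rfl | rfl
    · apply act_T_inv J τ _ _ _ (gq ^ (J.get j).2.2.2) (gp ^ (J.get j).2.1 * gq)
      · intro f g o
        rw [act_mul, act_mul, act_b, act_c, act_d, mul_assoc]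
      · intro f g h
        refine ⟨0, ?_⟩
        rw [mul_zero, mul_zero, add_zero, add_zero, mul_assoc g]
        exact h
    · apply act_T_inv J τ _ _ _ (gq ^ (J.get j).2.2.1) (gp ^ (J.get j).1)
      · intro f g o
        rw [act_mul, act_b, act_c]
      · rintro f g ⟨i, h⟩
        refine ⟨i + 1, ?_⟩
        rw [mul_assoc f, ← pow_add, mul_assoc g, ← pow_add] at h
        have e1 : (J.get j).2.2.2 + (J.get j).2.2.1 * (i + 1) =
          (J.get j).2.2.1 + ((J.get j).2.2.2 + (J.get j).2.2.1 * i) := by ring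
        have e2 : (J.get j).2.1 + (J.get j).1 * (i + 1) =
          (J.get j).1 + ((J.get j).2.1 + (J.get j).1 * i) := by ring
        rw [e1, e2]
        exact h
    · apply act_T_inv J τ _ _ _ gp 1
      · intro f g o
        rw [act_A, mul_one]
      · rintro f g ⟨i, h⟩
        rw [mul_one] at h
        exact L1.step f g _ _ ⟨J.get j, List.get_mem _ _, i, add_comm _ _, add_comm _ _⟩ h

/-! ### Positive words -/

/-- The positive word. -/
def pos (l : List Bool) : F2 := (l.map FreeGroup.of).prod

lemma pos_eq (l : List Bool) : pos l = FreeGroup.mk (l.map fun b => (b, true)) := by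
  induction l with
  | nil => rfl
  | cons b l ih =>
    rw [pos, List.map_cons, List.prod_cons]
    change _ * pos l = _
    rw [ih, FreeGroup.of, FreeGroup.mul_mk]; rfl

lemma pos_inj {l l' : List Bool} (h : pos l = pos l') : l = l' := by
  rw [pos_eq, pos_eq] at h
  have hr : ∀ m : List Bool, FreeGroup.reduce (m.map fun b => (b, true)) =
      m.map fun b => (b, true) := by
    intro m
    apply FreeGroup.IsReduced.reduce_eq
    rw [FreeGroup.IsReduced]
    rw [List.isChain_map]
    induction m with
    | nil => exact List.isChain_nil
    | cons a m ih =>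
      cases m with
      | nil => exact List.isChain_singleton _
      | cons b m => exact List.isChain_cons_cons.2 ⟨fun _ => rfl, ih⟩
  have := congrArg FreeGroup.toWord h
  rw [FreeGroup.toWord_mk, FreeGroup.toWord_mk, hr, hr] at this
  exact List.map_injective_iff.2 (fun a b e => (Prod.mk.inj e).1) this

lemma pos_append (l l') : pos (l ++ l') = pos l * pos l' := by
  rw [pos, List.map_append, List.prod_append]; rfl

lemma pos_rep (n : ℕ) : pos (List.replicate n false) = gq ^ n := by
  rw [pos, List.map_replicate, List.prod_replicate]; rfl

lemma pos_cons_true (l) : pos (true :: l) = gp * pos l := rfl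

/-- Left history word. -/
def hA : List (ℕ × ℕ) → List Bool
  | [] => [true]
  | x :: l => true :: (List.replicate x.2 false ++ hA l)

/-- Right history word. -/
def hB : List (ℕ × ℕ) → List Bool
  | [] => List.replicate τ false ++ [true]
  | x :: l => List.replicate x.1 false ++ true :: hB l

lemma L1_inv {f g : F2} (h : L1 J τ f g) : ∃ l : List (ℕ × ℕ), (∀ x ∈ l, CStep J x.1 x.2) ∧
    f * pos (hA l) = thH g * pos (hB τ l) := by
  induction h with
  | base f g h =>
    refine ⟨[], by simp, ?_⟩
    have := congrArg thH h
    rw [thH_thH, map_mul, map_mul, map_pow, thH_p, thH_q] at this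
    rw [hA, hB, pos_append, pos_rep]
    change f * (gp * 1) = thH g * (gq ^ τ * (gp * 1))
    rw [mul_one, ← this, mul_assoc]
  | step f g n m hnm h ih =>
    obtain ⟨l, hl, e⟩ := ih
    refine ⟨(n, m) :: l, ?_, ?_⟩
    · intro x hx
      rcases List.mem_cons.1 hx with rfl | hx
      · exact hnm
      · exact hl x hx
    · rw [map_mul, map_mul, map_pow, thH_p, thH_q] at e
      rw [hA, hB, pos_append, pos_rep, pos_cons_true, pos_cons_true, pos_append, pos_rep]
      simpa only [mul_assoc] using e

lemma rep_inj : ∀ (i j : ℕ) (u v : List Bool),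
    List.replicate i false ++ true :: u = List.replicate j false ++ true :: v → i = j ∧ u = v
  | 0, 0, u, v, h => by simpa using h
  | 0, j + 1, u, v, h => by simp [List.replicate_succ] at h
  | i + 1, 0, u, v, h => by simp [List.replicate_succ] at h
  | i + 1, j + 1, u, v, h => by
    have := rep_inj i j u v (by simpa [List.replicate_succ] using h)
    exact ⟨by omega, this.2⟩

lemma run_of_eq (l : List (ℕ × ℕ)) (hl : ∀ x ∈ l, CStep J x.1 x.2) (n : ℕ)
    (h : List.replicate n false ++ hA l = hB τ l) : ReflTransGen (CStep J) n τ := by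
  induction l generalizing n with
  | nil =>
    rw [(rep_inj _ _ _ _ h).1]
  | cons x l ih =>
    obtain ⟨e1, e2⟩ := rep_inj _ _ _ _ h
    rw [e1]
    exact .head (hl x (by simp)) (ih (fun y hy => hl y (by simp [hy])) _ e2)

theorem lower (n : ℕ) (h : SG J τ (query J n * wInv (query J n)) 1) :
    ReflTransGen (CStep J) n τ := by
  obtain ⟨f, hf, hr⟩ := exists_tf
  have h1 := ev_respects (PP J τ) f hf (wr J) (wws J τ) (act_r J τ)
    (by rw [hr]; exact act_ws J τ) h
  rw [map_one, query, ev_total_tconj, hr] at h1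
  let y0 : Pt := ((1, 1), none, 0)
  have hy0 : y0 ∈ II J τ 0 := Or.inr ⟨rfl, (map_one thH).symm⟩
  have h2 : (actX J τ 0).symm y0 ∈ I0 := by
    rw [← actX_mem J τ 0]; simpa using hy0
  have h3 := h1 _ h2
  rw [wT, act_mul, act_mul] at h3
  have e1 : act (PP J τ) (wX J 0) ((actX J τ 0).symm y0) = y0 := (actX J τ 0).apply_symm_apply y0
  rw [e1, act_c, ← actX_mem J τ 1] at h3
  have e2 : ∀ y, actX J τ 1 (act (PP J τ) (wInv (wX J 1)) y) = y :=
    fun y => act_act_wInv (PP J τ) (wX J 1) y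
  rw [e2] at h3
  have h4 : L1 J τ (1 * gq ^ n) 1 := by
    rcases h3 with h3 | ⟨_, h3⟩
    · cases h3
    · exact h3
  obtain ⟨l, hl, e⟩ := L1_inv J τ h4
  rw [one_mul, map_one, one_mul, ← pos_rep, ← pos_append] at e
  exact run_of_eq J τ l hl n (pos_inj e)

end sets

end OneRel


namespace OneRel
open Function Relation

/-! ## Part F: the reduction -/

lemma primrec_replicate {α : Type*} [Primcodable α] (x : α) :
    Primrec fun n : ℕ => List.replicate n x := by
  have : (fun n : ℕ => List.replicate n x) = fun n => (List.range n).map fun _ => x := by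
    funext n; simp
  rw [this]
  exact Primrec.list_map Primrec.list_range (Primrec.const x).to₂

lemma query_form (J : List Atom) : ∃ (l1 l2 : List (Fin (KK J + 1) × Bool)) (x : _), ∀ n,
    FreeMonoid.toList (query J n) = l1 ++ (List.replicate n x ++ l2) := by
  have hp : ∀ n, inc (KK J) (wA J ^ n) =
      FreeMonoid.ofList (List.replicate n (Fin.succ (0 : Fin (KK J)), true)) := by
    intro n
    induction n with
    | zero => rfl
    | succ n ih =>
      rw [pow_succ', map_mul, ih]; rfl
  refine ⟨FreeMonoid.toList (tl _ true * inc _ (wX J 0 * wZ J * wZ J)),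
    FreeMonoid.toList (inc _ (wInv (wZ J) * wInv (wZ J) * wInv (wX J 1)) * tl _ false),
    (Fin.succ (0 : Fin (KK J)), true), fun n => ?_⟩
  have : query J n = tl _ true * inc _ (wX J 0 * wZ J * wZ J) * (inc (KK J) (wA J ^ n) *
      (inc _ (wInv (wZ J) * wInv (wZ J) * wInv (wX J 1)) * tl _ false)) := by
    simp only [query, tconj, wT, wc, wC, map_mul, mul_assoc]
  rw [this, hp]
  rfl

lemma primrec_query (J : List Atom) : Primrec fun n => FreeMonoid.toList (query J n) := by
  obtain ⟨l1, l2, x, h⟩ := query_form J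
  rw [funext h]
  exact Primrec.list_append.comp (Primrec.const l1)
    (Primrec.list_append.comp (primrec_replicate x) (Primrec.const l2))

lemma primrec_pair (J : List Atom) : Primrec fun n =>
    ((query J n * wInv (query J n), 1) :
      FreeMonoid (Fin (KK J + 1) × Bool) × FreeMonoid (Fin (KK J + 1) × Bool)) := by
  have h := primrec_query J
  have hneg : Primrec fun p : Fin (KK J + 1) × Bool => (p.1, !p.2) :=
    Primrec.pair Primrec.fst (Primrec.not.comp Primrec.snd)
  have h2 : Primrec fun n => FreeMonoid.toList (query J n) ++
      ((FreeMonoid.toList (query J n)).map fun p => (p.1, !p.2)).reverse :=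
    Primrec.list_append.comp h
      (Primrec.list_reverse.comp (Primrec.list_map h (hneg.comp Primrec.snd).to₂))
  have h3 := (Primrec.of_equiv_symm
    (e := (FreeMonoid.toList : FreeMonoid (Fin (KK J + 1) × Bool) ≃ _))).comp h2
  exact Primrec.pair h3 (Primrec.const 1)

theorem main : ∃ (n : ℕ) (w : FreeMonoid (Fin n × Bool)),
      (¬ ComputablePred
        (fun p : FreeMonoid (Fin n × Bool) × FreeMonoid (Fin n × Bool) =>
          oneRelatorInvCon w p.1 p.2)) ∧
      (∀ u : FreeMonoid (Fin n × Bool),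
        FreeGroup.mk (FreeMonoid.toList u) ∈
            Subgroup.normalClosure {FreeGroup.mk (FreeMonoid.toList w)} →
          oneRelatorInvCon w (u * u) u) := by
  obtain ⟨J, N, s, τ, hJ⟩ := exists_affine
  refine ⟨KK J + 1, relator (wr J) (wws J τ), fun hc => hJ ?_, eUnitary (wr J) (wws J τ)⟩
  have hpow : Primrec fun n : ℕ => 2 ^ n := by
    have := Primrec.nat_rec₁ (f := fun _ IH => 2 * IH) 1
      ((Primrec.nat_mul.comp (Primrec.const 2) Primrec.snd).to₂)
    refine this.of_eq fun n => ?_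
    induction n with
    | zero => rfl
    | succ n ih => rw [pow_succ', ← ih]
  have hlin : Primrec fun n : ℕ => N * 2 ^ n + s :=
    Primrec.nat_add.comp (Primrec.nat_mul.comp (Primrec.const N) hpow) (Primrec.const s)
  have hred := ((primrec_pair J).comp hlin).to_comp
  refine ComputablePred.computable_of_manyOneReducible ⟨_, hred, fun n => ?_⟩ hc
  exact ⟨upper J τ _, lower J τ _⟩

end OneRel

/-- There is an `E`-unitary one-relator inverse monoid `Inv⟨A | w = 1⟩` with undecidable word
problem: the word problem of `Inv⟨A | w = 1⟩` is undecidable and every word whose image in the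
maximal group image `Gp⟨A | w = 1⟩` is trivial represents an idempotent. -/
theorem exists_eUnitary_oneRelator_invMonoid_undecidable_wordProblem :
    ∃ (n : ℕ) (w : FreeMonoid (Fin n × Bool)),
      (¬ ComputablePred
        (fun p : FreeMonoid (Fin n × Bool) × FreeMonoid (Fin n × Bool) =>
          oneRelatorInvCon w p.1 p.2)) ∧
      (∀ u : FreeMonoid (Fin n × Bool),
        FreeGroup.mk (FreeMonoid.toList u) ∈
            Subgroup.normalClosure {FreeGroup.mk (FreeMonoid.toList w)} →
          oneRelatorInvCon w (u * u) u) := by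
  exact OneRel.main
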